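/- Gradient weighted space-time estimate: let n ≥ 3 and η > 0. There is a constant C (depending on n and η) such that every finite-energy solution φ of the homogeneous wave equation □φ = 0 on ℝ^{n+1} satisfies ∫_{−∞}^{∞} ∫_{ℝⁿ} (1+|x|)^{−1−η} |∇_x φ(t,x)|² dx dt ≤ C ( ‖∇_x φ(0)‖²_{L²} + ‖∂_t φ(0)‖²_{L²} ). -/

import Mathlib

open MeasureTheory Real Complex ENNReal
open scoped FourierTransform RealInnerProductSpace ComplexConjugate

noncomputable section

/-- Euclidean space `ℝⁿ`. -/
abbrev Eucl (n : ℕ) := EuclideanSpace ℝ (Fin n)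

/-- A function on `ℝⁿ` is unit frequency if its Fourier transform is supported
in the annulus `1/2 < ‖ξ‖ < 2`. -/
def UnitFrequency {n : ℕ} (f : Eucl n → ℂ) : Prop :=
  ∀ ξ : Eucl n, 𝓕 f ξ ≠ 0 → 1 / 2 < ‖ξ‖ ∧ ‖ξ‖ < 2

/-- The half-wave propagator `e^{it√(−Δ)} f (x) = ∫ e^{2πit|ξ|} e^{2πi x·ξ} f̂(ξ) dξ`. -/
def waveProp {n : ℕ} (f : Eucl n → ℂ) (t : ℝ) (x : Eucl n) : ℂ :=
  ∫ ξ : Eucl n,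
    Complex.exp (2 * (π : ℂ) * Complex.I * (t : ℂ) * (‖ξ‖ : ℂ)) *
      Complex.exp (2 * (π : ℂ) * Complex.I * ((⟪x, ξ⟫ : ℝ) : ℂ)) * 𝓕 f ξ

/-- The mixed space-time norm `‖u‖_{L^q_t(L^r_x)}`. -/
def mixedNorm {n : ℕ} (q r : ℝ≥0∞) (u : ℝ → Eucl n → ℂ) : ℝ≥0∞ :=
  if q = ∞ then essSup (fun t : ℝ => eLpNorm (u t) r volume) volume
  else (∫⁻ t : ℝ, eLpNorm (u t) r volume ^ q.toReal) ^ (1 / q.toReal)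

/-- Time derivative of a space-time function. -/
def timeDeriv {n : ℕ} (u : ℝ → Eucl n → ℂ) (t : ℝ) (x : Eucl n) : ℂ :=
  deriv (fun s => u s x) t

/-- The spatial Laplacian `Δf(x) = Σᵢ ∂²f/∂xᵢ²`. -/
def lapE {n : ℕ} (f : Eucl n → ℂ) (x : Eucl n) : ℂ :=
  ∑ i : Fin n,
    fderiv ℝ (fun y => fderiv ℝ f y (EuclideanSpace.single i (1 : ℝ))) x
      (EuclideanSpace.single i (1 : ℝ))

/-- `u` is a (classical, smooth) solution of the wave equation `□u = −∂ₜ²u + Δu = 0`. -/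
def IsWaveSolution {n : ℕ} (u : ℝ → Eucl n → ℂ) : Prop :=
  ContDiff ℝ (⊤ : ℕ∞) (fun p : ℝ × Eucl n => u p.1 p.2) ∧
    ∀ t x, timeDeriv (timeDeriv u) t x = lapE (u t) x

/-- A spherically symmetric (radial) function. -/
def IsRadial {n : ℕ} (f : Eucl n → ℂ) : Prop :=
  ∀ x y : Eucl n, ‖x‖ = ‖y‖ → f x = f y

/-- The homogeneous Sobolev norm `‖f‖_{Ḣ^γ} = ‖ |ξ|^γ f̂ ‖_{L²}`. -/
def homSobolevNorm {n : ℕ} (γ : ℝ) (f : Eucl n → ℂ) : ℝ≥0∞ :=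
  eLpNorm (fun ξ : Eucl n => ((‖ξ‖ ^ γ : ℝ) : ℂ) * 𝓕 f ξ) 2 volume

/-- `H` is (the extension of) a spherical harmonic of degree `l` on `ℝⁿ`:
a smooth, harmonic, degree-`l` homogeneous function. -/
def IsSphericalHarmonic (n l : ℕ) (H : Eucl n → ℂ) : Prop :=
  ContDiff ℝ (⊤ : ℕ∞) H ∧ (∀ (c : ℝ) (x : Eucl n), H (c • x) = (c : ℂ) ^ l * H x) ∧
    ∀ x, lapE H x = 0

/-- A function is localized at angular frequency `N` if its spherical harmonic
expansion only involves degrees `l` with `N/2 ≤ l ≤ 4N`. -/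
def AngularlyLocalized (n N : ℕ) (f : Eucl n → ℂ) : Prop :=
  ∃ (I : Finset (ℕ × ℕ)) (Y : ℕ × ℕ → Eucl n → ℂ) (c : ℕ × ℕ → ℝ → ℂ),
    (∀ p ∈ I, ((N : ℝ) / 2 ≤ (p.1 : ℝ) ∧ (p.1 : ℝ) ≤ 4 * N) ∧
      IsSphericalHarmonic n p.1 (Y p)) ∧
    ∀ x : Eucl n, x ≠ 0 → f x = ∑ p ∈ I, c p ‖x‖ * Y p (‖x‖⁻¹ • x)

/-- The normalized surface measure on the unit sphere `S^{n-1} ⊆ ℝⁿ`. -/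
def unitSphereMeasure (n : ℕ) : Measure (Metric.sphere (0 : Eucl n) 1) :=
  (((volume : Measure (Eucl n)).toSphere Set.univ)⁻¹) • (volume : Measure (Eucl n)).toSphere

/-- An `L²`-type spherical harmonics expansion of a function `f` on `ℝⁿ`, with an
orthonormal family of spherical harmonics. -/
structure SphExpansion (n : ℕ) (f : Eucl n → ℂ) where
  /-- number of harmonics used in each degree -/
  d : ℕ → ℕ
  /-- the orthonormal family of spherical harmonics, `Y (l,i)` of degree `l` -/
  Y : ℕ × ℕ → Eucl n → ℂ
  /-- the (radial) coefficients -/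
  c : ℕ × ℕ → ℝ → ℂ
  harmonic : ∀ p : ℕ × ℕ, p.2 < d p.1 → IsSphericalHarmonic n p.1 (Y p)
  coeff_zero : ∀ p : ℕ × ℕ, ¬p.2 < d p.1 → ∀ r : ℝ, c p r = 0
  orthonormal : ∀ p q : ℕ × ℕ, p.2 < d p.1 → q.2 < d q.1 →
    ∫ ω : Metric.sphere (0 : Eucl n) 1,
        Y p (ω : Eucl n) * conj (Y q (ω : Eucl n)) ∂(unitSphereMeasure n) =
      if p = q then 1 else 0
  expand : ∀ x : Eucl n, x ≠ 0 →
    f x = ∑' p : ℕ × ℕ, c p ‖x‖ * Y p (‖x‖⁻¹ • x)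

/-- The fractional angular derivative `|Ω|^s f = Σ [l(n+l−2)]^{s/2} c^l_i Y^l_i`,
computed from a spherical harmonics expansion of `f`. -/
def SphExpansion.omegaPow {n : ℕ} {f : Eucl n → ℂ} (e : SphExpansion n f) (s : ℝ) :
    Eucl n → ℂ := fun x =>
  ∑' p : ℕ × ℕ,
    ((((p.1 * (n + p.1 - 2) : ℕ) : ℝ) ^ (s / 2) : ℝ) : ℂ) * e.c p ‖x‖ * e.Y p (‖x‖⁻¹ • x)

/-- The Bessel function of order `s`, given by the integral formula
`J_s(y) = ((−i)^s/(4π)) ∫_{−2π}^{2π} e^{iy cos θ} e^{−isθ} dθ`. -/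
def besselJ (s : ℝ) (y : ℝ) : ℂ :=
  (-Complex.I) ^ (s : ℂ) / (4 * (π : ℂ)) *
    ∫ θ in (-(2 * π) : ℝ)..(2 * π),
      Complex.exp (Complex.I * ((y * Real.cos θ : ℝ) : ℂ)) *
        Complex.exp (-(Complex.I * (s : ℂ) * (θ : ℂ)))

/-- The Hankel–φ wave packet `ψ^l_m(r) = ∫_0^∞ J_{(n−2)/2+l}(2πrρ) e^{−2πimρ} χ(ρ) dρ`. -/
def hankelPsi (n : ℕ) (χ : ℝ → ℝ) (l : ℕ) (m r : ℝ) : ℂ :=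
  ∫ ρ in Set.Ioi (0 : ℝ),
    besselJ (((n : ℝ) - 2) / 2 + l) (2 * π * r * ρ) *
      Complex.exp (-(2 * (π : ℂ) * Complex.I * (m : ℂ) * (ρ : ℂ))) * ((χ ρ : ℝ) : ℂ)

/-- `Q` is a partition of `ℝⁿ` into (axis-parallel, half-open) cubes of side length `∼ L`. -/
def IsCubePartition {ι : Type} (n : ℕ) (L : ℝ) (Q : ι → Set (Eucl n)) : Prop :=
  (∀ x : Eucl n, ∃! i : ι, x ∈ Q i) ∧
    ∀ i : ι, ∃ (a : Eucl n) (s : ℝ), L / 2 ≤ s ∧ s ≤ 2 * L ∧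
      Q i = {x : Eucl n | ∀ j : Fin n, a j ≤ x j ∧ x j < a j + s}

/-- The coarse scale norm `(Σ_α ‖f‖_{L²(Q_α)}^r)^{1/r}` over a family of cubes. -/
def cubeNorm {ι : Type} {n : ℕ} (Q : ι → Set (Eucl n)) (r : ℝ≥0∞) (f : Eucl n → ℂ) :
    ℝ≥0∞ :=
  if r = ∞ then ⨆ i : ι, eLpNorm f 2 (volume.restrict (Q i))
  else (∑' i : ι, eLpNorm f 2 (volume.restrict (Q i)) ^ r.toReal) ^ (1 / r.toReal)

/-- The squared length of the spatial gradient, `|∇f(x)|² = Σᵢ |∂ᵢf(x)|²`. -/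
def gradSq {n : ℕ} (f : Eucl n → ℂ) (x : Eucl n) : ℝ :=
  ∑ i : Fin n, ‖fderiv ℝ f x (EuclideanSpace.single i (1 : ℝ))‖ ^ 2

/-- The squared radial derivative `|∂_r f(x)|² = |(x/|x|)·∇f(x)|²`. -/
def radSq {n : ℕ} (f : Eucl n → ℂ) (x : Eucl n) : ℝ :=
  ‖fderiv ℝ f x (‖x‖⁻¹ • x)‖ ^ 2

end

/-! Fix `R ≤ ρ` and pair the wave equation on `0 ≤ t ≤ ρ` with the Morawetz multiplier
`k (x·∇u + (n-1)/2 u)`, where `k = (R² + |x|²)^{-1/2}` is cut off at `|x| ~ ρ`. The bulk term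
dominates `R² (R² + |x|²)^{-3/2} (|∇u|² + |∂ₜu|²)`, which is at least `1/R` times the energy density
in `|x| ≤ R` (up to a constant), except for errors supported in `ρ ≤ |x| ≤ 2ρ`.

Subtracting a constant from `u` makes its mass in `|x| ≤ 2ρ` at most a multiple of `ρ² E`, where `E`
is the initial energy: at `t = 0` by Poincaré's inequality, and up to `t = ρ` by integrating `∂ₜu`.
So the cutoff errors are `O(E/ρ)` at each time, hence `O(E)` in total, and Hardy's inequality
bounds the boundary terms at `t = 0` and `t = ρ` by `O(E)`.

Letting `ρ → ∞` and reflecting time shows that the space-time integral of the energy density over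
`|x| ≤ R` is at most `C R E`. It remains to sum over `R = 2^{k+1}` with weights `2^{-k(1+η)}`. -/

namespace WaveEquation

open Function Set
open scoped Topology ContDiff

noncomputable section

section Calculus

variable {E F : Type*} [NormedAddCommGroup E] [NormedSpace ℝ E] [NormedAddCommGroup F]
  [NormedSpace ℝ F]

/-- The time derivative `∂ₜu` of a space-time function, kept in curried form so that its time
slices are functions on space. -/
def timePartial (u : ℝ → E → F) (t : ℝ) (x : E) : F := deriv (fun s => u s x) t

/-- The derivative `x·∇f` of `f` along the Euler (radial) vector field. -/
def eulerDeriv (f : E → F) (x : E) : F := fderiv ℝ f x x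

variable {u : ℝ → E → F} {f : E → F} {m : WithTop ℕ∞}

lemma contDiff_slice (hu : ContDiff ℝ m (uncurry u)) (t : ℝ) : ContDiff ℝ m (u t) :=
  hu.comp (contDiff_prodMk_right t)

lemma timePartial_eq_fderiv_uncurry (hu : Differentiable ℝ (uncurry u)) (t : ℝ) (x : E) :
    timePartial u t x = fderiv ℝ (uncurry u) (t, x) (1, 0) := by
  have h : HasDerivAt (uncurry u ∘ fun s => (s, x)) (fderiv ℝ (uncurry u) (t, x) (1, 0)) t :=
    (hu (t, x)).hasFDerivAt.comp_hasDerivAt t ((hasDerivAt_id t).prodMk (hasDerivAt_const t x))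
  exact h.deriv

lemma fderiv_slice_eq_fderiv_uncurry (hu : Differentiable ℝ (uncurry u)) (t : ℝ) (x v : E) :
    fderiv ℝ (u t) x v = fderiv ℝ (uncurry u) (t, x) (0, v) := by
  have h := (hu (t, x)).hasFDerivAt.comp x (hasFDerivAt_prodMk_right t x)
  exact congrArg (· v) h.fderiv

lemma hasDerivAt_timePartial (hu : ContDiff ℝ 1 (uncurry u)) (t : ℝ) (x : E) :
    HasDerivAt (fun s => u s x) (timePartial u t x) t :=
  ((hu.comp (contDiff_prodMk_left x)).differentiable one_ne_zero t).hasDerivAt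

lemma contDiff_timePartial (hu : ContDiff ℝ (m + 1) (uncurry u)) :
    ContDiff ℝ m (uncurry (timePartial u)) := by
  have h : ContDiff ℝ m fun p : ℝ × E => fderiv ℝ (uncurry u) p (1, 0) :=
    (hu.fderiv_right le_rfl).clm_apply contDiff_const
  convert h using 1
  ext p
  exact timePartial_eq_fderiv_uncurry (hu.differentiable (by simp)) p.1 p.2

lemma contDiff_fderiv_slice_apply (hu : ContDiff ℝ (m + 1) (uncurry u)) {v : E → E}
    (hv : ContDiff ℝ m v) : ContDiff ℝ m (uncurry fun t x => fderiv ℝ (u t) x (v x)) := by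
  have hu' : ContDiff ℝ (m + 1) (uncurry fun (p : ℝ × E) y => u p.1 y) :=
    hu.comp (contDiff_fst.fst.prodMk contDiff_snd)
  exact hu'.fderiv_apply contDiff_snd (hv.comp contDiff_snd) le_rfl

lemma hasDerivAt_fderiv_slice_apply (hu : ContDiff ℝ 2 (uncurry u)) (t : ℝ) (x v : E) :
    HasDerivAt (fun s => fderiv ℝ (u s) x v) (fderiv ℝ (timePartial u t) x v) t := by
  have hd : Differentiable ℝ (uncurry u) := hu.differentiable two_ne_zero
  have hD : HasFDerivAt (fderiv ℝ (uncurry u)) (fderiv ℝ (fderiv ℝ (uncurry u)) (t, x)) (t, x) :=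
    ((hu.fderiv_right (m := 1) le_rfl).differentiable one_ne_zero _).hasFDerivAt
  have hsymm : IsSymmSndFDerivAt ℝ (uncurry u) (t, x) :=
    hu.contDiffAt.isSymmSndFDerivAt (by simp)
  have htime : HasDerivAt (fun s => fderiv ℝ (uncurry u) (s, x))
      (fderiv ℝ (fderiv ℝ (uncurry u)) (t, x) (1, 0)) t :=
    hD.comp_hasDerivAt t ((hasDerivAt_id t).prodMk (hasDerivAt_const t x))
  have hspace : HasFDerivAt (fun y => fderiv ℝ (uncurry u) (t, y))
      (fderiv ℝ (fderiv ℝ (uncurry u)) (t, x) ∘L .inr ℝ ℝ E) x :=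
    hD.comp x (hasFDerivAt_prodMk_right t x)
  have hspace' : fderiv ℝ (fun y => fderiv ℝ (uncurry u) (t, y) (1, 0)) x v =
      fderiv ℝ (fderiv ℝ (uncurry u)) (t, x) (0, v) (1, 0) := by
    simp [fderiv_clm_apply hspace.differentiableAt (differentiableAt_const _), hspace.fderiv]
  simp only [fderiv_slice_eq_fderiv_uncurry hd, funext (timePartial_eq_fderiv_uncurry hd t),
    hspace', ← hsymm (1, 0) (0, v)]
  simpa using htime.clm_apply (hasDerivAt_const t ((0 : ℝ), v))

lemma contDiff_eulerDeriv (hf : ContDiff ℝ (m + 1) f) : ContDiff ℝ m (eulerDeriv f) :=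
  (hf.fderiv_right le_rfl).clm_apply contDiff_id

lemma fderiv_eulerDeriv (hf : ContDiff ℝ 2 f) (x v : E) :
    fderiv ℝ (eulerDeriv f) x v = fderiv ℝ f x v + eulerDeriv (fun y => fderiv ℝ f y v) x := by
  have hd : DifferentiableAt ℝ (fderiv ℝ f) x :=
    (hf.fderiv_right (m := 1) le_rfl).differentiable one_ne_zero x
  have hsymm : IsSymmSndFDerivAt ℝ f x := hf.contDiffAt.isSymmSndFDerivAt (by simp)
  unfold eulerDeriv
  simp [fderiv_clm_apply hd differentiableAt_fun_id, fderiv_clm_apply hd (differentiableAt_const v),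
    hsymm v x]

end Calculus

section Coordinates

variable {n : ℕ} {F : Type*} [NormedAddCommGroup F] [NormedSpace ℝ F]

/-- The coordinate derivative `∂ᵢf`. -/
def partialDeriv (i : Fin n) (f : Eucl n → F) (x : Eucl n) : F :=
  fderiv ℝ f x (EuclideanSpace.single i 1)

/-- The Laplacian `Δf = Σᵢ ∂ᵢ∂ᵢf`. -/
def coordLaplacian (f : Eucl n → F) (x : Eucl n) : F :=
  ∑ i, partialDeriv i (partialDeriv i f) x

/-- The divergence `Σᵢ ∂ᵢPᵢ` of a vector field given by its components. -/
def coordDiv (P : Fin n → Eucl n → ℝ) (x : Eucl n) : ℝ := ∑ i, partialDeriv i (P i) x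

/-- The squared length `|∇f|² = Σᵢ ‖∂ᵢf‖²` of the gradient. -/
def gradNormSq (f : Eucl n → F) (x : Eucl n) : ℝ := ∑ i, ‖partialDeriv i f x‖ ^ 2

lemma gradNormSq_nonneg (f : Eucl n → F) (x : Eucl n) : 0 ≤ gradNormSq f x :=
  Finset.sum_nonneg fun _ _ => sq_nonneg _

variable {a b : Eucl n → ℝ} {f g : Eucl n → F} {x : Eucl n} {m : WithTop ℕ∞}

lemma contDiff_partialDeriv (hf : ContDiff ℝ (m + 1) f) (i : Fin n) :
    ContDiff ℝ m (partialDeriv i f) :=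
  (hf.fderiv_right le_rfl).clm_apply contDiff_const

lemma partialDeriv_add (hf : DifferentiableAt ℝ f x) (hg : DifferentiableAt ℝ g x) (i : Fin n) :
    partialDeriv i (fun y => f y + g y) x = partialDeriv i f x + partialDeriv i g x := by
  simp [partialDeriv, fderiv_fun_add hf hg]

lemma partialDeriv_smul (ha : DifferentiableAt ℝ a x) (hf : DifferentiableAt ℝ f x) (i : Fin n) :
    partialDeriv i (fun y => a y • f y) x =
      partialDeriv i a x • f x + a x • partialDeriv i f x := by
  simp [partialDeriv, fderiv_fun_smul ha hf, add_comm]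

lemma partialDeriv_mul (ha : DifferentiableAt ℝ a x) (hb : DifferentiableAt ℝ b x) (i : Fin n) :
    partialDeriv i (fun y => a y * b y) x =
      partialDeriv i a x * b x + a x * partialDeriv i b x :=
  partialDeriv_smul ha hb i

lemma fderiv_apply_eq_sum (f : Eucl n → F) (x v : Eucl n) :
    fderiv ℝ f x v = ∑ i, v i • partialDeriv i f x := by
  conv_lhs => rw [← (EuclideanSpace.basisFun (Fin n) ℝ).sum_repr v]
  simp [partialDeriv]

lemma eulerDeriv_eq_sum (f : Eucl n → F) (x : Eucl n) :
    eulerDeriv f x = ∑ i, x i • partialDeriv i f x :=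
  fderiv_apply_eq_sum f x x

lemma norm_sum_smul_sq_le (c : Fin n → ℝ) (v : Fin n → F) :
    ‖∑ i, c i • v i‖ ^ 2 ≤ (∑ i, c i ^ 2) * ∑ i, ‖v i‖ ^ 2 := by
  calc ‖∑ i, c i • v i‖ ^ 2 ≤ (∑ i, |c i| * ‖v i‖) ^ 2 := by
        gcongr
        exact (norm_sum_le _ _).trans_eq (by simp [norm_smul])
    _ ≤ (∑ i, |c i| ^ 2) * ∑ i, ‖v i‖ ^ 2 := Finset.sum_mul_sq_le_sq_mul_sq _ _ _
    _ = (∑ i, c i ^ 2) * ∑ i, ‖v i‖ ^ 2 := by simp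

lemma norm_fderiv_apply_sq_le (f : Eucl n → F) (x v : Eucl n) :
    ‖fderiv ℝ f x v‖ ^ 2 ≤ ‖v‖ ^ 2 * gradNormSq f x := by
  rw [fderiv_apply_eq_sum, EuclideanSpace.real_norm_sq_eq]
  exact norm_sum_smul_sq_le _ _

lemma gradNormSq_smul_le (ha : DifferentiableAt ℝ a x) (hf : DifferentiableAt ℝ f x) :
    gradNormSq (fun y => a y • f y) x ≤
      2 * (a x ^ 2 * gradNormSq f x + gradNormSq a x * ‖f x‖ ^ 2) := by
  simp only [gradNormSq, Finset.mul_sum, Finset.sum_mul, ← Finset.sum_add_distrib,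
    partialDeriv_smul ha hf]
  gcongr with i
  calc ‖partialDeriv i a x • f x + a x • partialDeriv i f x‖ ^ 2
      ≤ (‖partialDeriv i a x • f x‖ + ‖a x • partialDeriv i f x‖) ^ 2 := by
        gcongr; exact norm_add_le _ _
    _ ≤ 2 * (‖partialDeriv i a x • f x‖ ^ 2 + ‖a x • partialDeriv i f x‖ ^ 2) := add_sq_le
    _ = _ := by simp only [norm_smul, mul_pow, Real.norm_eq_abs, sq_abs]; ring

lemma coordDiv_add {P Q : Fin n → Eucl n → ℝ} (hP : ∀ i, DifferentiableAt ℝ (P i) x)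
    (hQ : ∀ i, DifferentiableAt ℝ (Q i) x) :
    coordDiv (fun i y => P i y + Q i y) x = coordDiv P x + coordDiv Q x := by
  simp only [coordDiv, partialDeriv_add (hP _) (hQ _), Finset.sum_add_distrib]

lemma coordDiv_mul {P : Fin n → Eucl n → ℝ} (ha : DifferentiableAt ℝ a x)
    (hP : ∀ i, DifferentiableAt ℝ (P i) x) :
    coordDiv (fun i y => a y * P i y) x =
      ∑ i, partialDeriv i a x * P i x + a x * coordDiv P x := by
  simp only [coordDiv, partialDeriv_mul ha (hP _), Finset.sum_add_distrib, Finset.mul_sum]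

lemma coordDiv_const_mul (c : ℝ) {P : Fin n → Eucl n → ℝ} (hP : ∀ i, DifferentiableAt ℝ (P i) x) :
    coordDiv (fun i y => c * P i y) x = c * coordDiv P x := by
  simp [coordDiv_mul (differentiableAt_const c) hP, partialDeriv]

lemma differentiable_coord (i : Fin n) : Differentiable ℝ fun y : Eucl n => y i := by fun_prop

lemma partialDeriv_coord (i j : Fin n) (x : Eucl n) :
    partialDeriv i (fun y : Eucl n => y j) x = if i = j then 1 else 0 := by
  have h : HasFDerivAt (fun y : Eucl n => y j) (EuclideanSpace.proj j : Eucl n →L[ℝ] ℝ) x :=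
    (EuclideanSpace.proj j : Eucl n →L[ℝ] ℝ).hasFDerivAt
  simp [partialDeriv, h.fderiv, eq_comm]

lemma coordDiv_mul_coord (ha : DifferentiableAt ℝ a x) :
    coordDiv (fun i y => a y * y i) x = eulerDeriv a x + n * a x := by
  rw [coordDiv_mul ha fun i => differentiable_coord i x, eulerDeriv_eq_sum]
  simp [coordDiv, partialDeriv_coord, mul_comm]

end Coordinates

section InnerProduct

variable {n : ℕ} {F : Type*} [NormedAddCommGroup F] [InnerProductSpace ℝ F] {f g : Eucl n → F}
  {x : Eucl n} {m : WithTop ℕ∞}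

lemma contDiff_gradNormSq (hf : ContDiff ℝ (m + 1) f) : ContDiff ℝ m (gradNormSq f) :=
  ContDiff.sum fun i _ => (contDiff_partialDeriv hf i).norm_sq ℝ

lemma partialDeriv_inner (hf : DifferentiableAt ℝ f x) (hg : DifferentiableAt ℝ g x) (i : Fin n) :
    partialDeriv i (fun y => ⟪f y, g y⟫) x =
      ⟪partialDeriv i f x, g x⟫ + ⟪f x, partialDeriv i g x⟫ := by
  simp [partialDeriv, fderiv_inner_apply ℝ hf hg, add_comm]

lemma fderiv_norm_sq_apply (hf : DifferentiableAt ℝ f x) (v : Eucl n) :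
    fderiv ℝ (fun y => ‖f y‖ ^ 2) x v = 2 * ⟪f x, fderiv ℝ f x v⟫ := by
  simp [hf.hasFDerivAt.norm_sq.fderiv]

lemma coordDiv_inner_partialDeriv (hf : ContDiff ℝ 2 f) (hg : DifferentiableAt ℝ g x) :
    coordDiv (fun i y => ⟪partialDeriv i f y, g y⟫) x =
      ⟪coordLaplacian f x, g x⟫ + ∑ i, ⟪partialDeriv i f x, partialDeriv i g x⟫ := by
  have hd (i : Fin n) : DifferentiableAt ℝ (partialDeriv i f) x :=
    (contDiff_partialDeriv (m := 1) hf i).differentiable one_ne_zero x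
  simp only [coordDiv, partialDeriv_inner (hd _) hg, Finset.sum_add_distrib, coordLaplacian,
    sum_inner]

end InnerProduct

section Integration

variable {E : Type*} [NormedAddCommGroup E] [MeasurableSpace E] [BorelSpace E] {μ : Measure E}
  {K : Set E}

lemma integrableOn_slice [IsFiniteMeasureOnCompacts μ] {G : ℝ → E → ℝ}
    (hG : Continuous (uncurry G)) (hK : IsCompact K) (t : ℝ) : IntegrableOn (G t) K μ :=
  (hG.uncurry_left t).continuousOn.integrableOn_compact hK

lemma continuous_setIntegral_slice [SecondCountableTopology E] [IsLocallyFiniteMeasure μ]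
    {G : ℝ → E → ℝ} (hG : Continuous (uncurry G)) (hK : IsCompact K) :
    Continuous fun t => ∫ x in K, G t x ∂μ :=
  continuous_parametric_integral_of_continuous hG hK

variable [NormedSpace ℝ E]

lemma intervalIntegral_setIntegral_timePartial [SecondCountableTopology E] [SFinite μ]
    [IsFiniteMeasureOnCompacts μ] {G : ℝ → E → ℝ} (hG : ContDiff ℝ 1 (uncurry G))
    (hK : IsCompact K) (a b : ℝ) :
    ∫ t in a..b, ∫ x in K, timePartial G t x ∂μ = ∫ x in K, G b x ∂μ - ∫ x in K, G a x ∂μ := by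
  have hG' : Continuous (uncurry (timePartial G)) := (contDiff_timePartial (m := 0) hG).continuous
  have hint : IntegrableOn (uncurry (timePartial G)) (uIcc a b ×ˢ K) (volume.prod μ) :=
    hG'.continuousOn.integrableOn_compact (isCompact_uIcc.prod hK)
  rw [intervalIntegral_integral_swap, ← integral_sub (integrableOn_slice hG.continuous hK b)
    (integrableOn_slice hG.continuous hK a)]
  · congr 1 with x
    exact intervalIntegral.integral_eq_sub_of_hasDerivAt
      (fun t _ => hasDerivAt_timePartial hG t x) ((hG'.uncurry_right x).intervalIntegrable a b)
  · rw [Measure.prod_restrict]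
    exact hint.mono_set (prod_mono uIoc_subset_uIcc le_rfl)

lemma setIntegral_fderiv_apply_eq_zero [FiniteDimensional ℝ E]
    [μ.IsAddHaarMeasure] {f : E → ℝ} (hf : ContDiff ℝ 1 f) (hK : IsCompact K)
    (hfK : ∀ x ∉ K, f x = 0) (v : E) : ∫ x in K, fderiv ℝ f x v ∂μ = 0 := by
  have hsupp : HasCompactSupport f := .intro hK hfK
  have hfK' : ∀ x ∉ K, fderiv ℝ f x v = 0 := fun x hx => by
    have : f =ᶠ[𝓝 x] fun _ => 0 :=
      Filter.mem_of_superset (hK.isClosed.isOpen_compl.mem_nhds hx) hfK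
    simp [this.fderiv_eq]
  have hint : Integrable (fun x => fderiv ℝ f x v) μ :=
    ((hf.continuous_fderiv one_ne_zero).clm_apply continuous_const).integrable_of_hasCompactSupport
      (.intro hK hfK')
  rw [setIntegral_eq_integral_of_forall_compl_eq_zero hfK']
  simpa using integral_mul_fderiv_eq_neg_fderiv_mul_of_integrable (μ := μ)
    (f := fun _ => (1 : ℝ)) (g := f) (v := v) (by simp) (by simpa using hint)
    (by simpa using hf.continuous.integrable_of_hasCompactSupport hsupp) (by fun_prop)
    (fun x _ => hf.differentiable one_ne_zero x)

lemma setIntegral_nonpos_of_le_coordDiv {n : ℕ} {f : Eucl n → ℝ} {P : Fin n → Eucl n → ℝ}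
    {K : Set (Eucl n)} (hK : IsCompact K) (hf : Continuous f) (hP : ∀ i, ContDiff ℝ 1 (P i))
    (hPK : ∀ i, ∀ x ∉ K, P i x = 0) (hfP : ∀ x, f x ≤ coordDiv P x) : ∫ x in K, f x ≤ 0 := by
  have hint (i : Fin n) : IntegrableOn (partialDeriv i (P i)) K :=
    (contDiff_partialDeriv (m := 0) (hP i) i).continuous.continuousOn.integrableOn_compact hK
  calc ∫ x in K, f x ≤ ∫ x in K, coordDiv P x :=
        setIntegral_mono (hf.continuousOn.integrableOn_compact hK)
          (integrable_finsetSum _ fun i _ => hint i) hfP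
    _ = ∑ i, ∫ x in K, partialDeriv i (P i) x := integral_finsetSum _ fun i _ => hint i
    _ = 0 := Finset.sum_eq_zero fun i _ => setIntegral_fderiv_apply_eq_zero (hP i) hK (hPK i) _

end Integration

section Bracket

variable {n : ℕ} {R : ℝ}

/-- The regularized length `√(R² + |x|²)`. -/
def bracket (R : ℝ) (x : Eucl n) : ℝ := √(R ^ 2 + ‖x‖ ^ 2)

lemma bracket_sq (R : ℝ) (x : Eucl n) : bracket R x ^ 2 = R ^ 2 + ‖x‖ ^ 2 :=
  Real.sq_sqrt (by positivity)

lemma bracket_pos (hR : 0 < R) (x : Eucl n) : 0 < bracket R x := by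
  unfold bracket; positivity

lemma norm_le_bracket (R : ℝ) (x : Eucl n) : ‖x‖ ≤ bracket R x :=
  Real.le_sqrt_of_sq_le (by linarith [sq_nonneg R])

lemma bracket_le_add_norm (hR : 0 < R) (x : Eucl n) : bracket R x ≤ R + ‖x‖ :=
  Real.sqrt_le_iff.2 ⟨by positivity, by nlinarith [norm_nonneg x]⟩

lemma contDiff_bracket (hR : 0 < R) {m : WithTop ℕ∞} : ContDiff ℝ m (bracket (n := n) R) :=
  (contDiff_const.add (contDiff_norm_sq ℝ)).sqrt fun _ => by positivity

lemma partialDeriv_bracket (hR : 0 < R) (i : Fin n) (x : Eucl n) :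
    partialDeriv i (bracket R) x = x i / bracket R x := by
  have h : HasFDerivAt (bracket (n := n) R) _ x :=
    ((hasStrictFDerivAt_norm_sq x).hasFDerivAt.const_add (R ^ 2)).sqrt (by positivity)
  have hi : partialDeriv i (bracket R) x = 1 / (2 * bracket R x) * (2 * x i) := by
    simp [partialDeriv, h.fderiv, EuclideanSpace.inner_single_right, bracket]
  rw [hi]
  ring

lemma gradNormSq_bracket_le_one (hR : 0 < R) (x : Eucl n) : gradNormSq (bracket R) x ≤ 1 := by
  simp only [gradNormSq, partialDeriv_bracket hR, Real.norm_eq_abs, sq_abs, div_pow,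
    ← Finset.sum_div, ← EuclideanSpace.real_norm_sq_eq]
  rw [div_le_one (pow_pos (bracket_pos hR x) 2)]
  gcongr
  exact norm_le_bracket R x

end Bracket

section Energy

variable {n : ℕ} {F : Type*} [NormedAddCommGroup F] [NormedSpace ℝ F]

/-- Classical (twice continuously differentiable) solutions of the wave equation `∂ₜ²u = Δu`. -/
structure IsClassicalWave (u : ℝ → Eucl n → F) : Prop where
  contDiff : ContDiff ℝ 2 (uncurry u)
  wave_eq : ∀ t x, timePartial (timePartial u) t x = coordLaplacian (u t) x

/-- The energy density `|∇u|² + ‖∂ₜu‖²`, without the customary factor `1/2`. -/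
def energyDensity (u : ℝ → Eucl n → F) (t : ℝ) (x : Eucl n) : ℝ :=
  gradNormSq (u t) x + ‖timePartial u t x‖ ^ 2

/-- The (possibly infinite) energy `∫ |∇u|² + ‖∂ₜu‖²` at time `t`. -/
def energy (u : ℝ → Eucl n → F) (t : ℝ) : ℝ≥0∞ := ∫⁻ x, ENNReal.ofReal (energyDensity u t x)

/-- A smooth version of the indicator function of the backward light cone
`{(t, x) | |x| + t ≤ M}`. -/
def coneCutoff (M t : ℝ) (x : Eucl n) : ℝ := smoothTransition (M - bracket 1 x - t)

lemma energyDensity_nonneg (u : ℝ → Eucl n → F) (t : ℝ) (x : Eucl n) : 0 ≤ energyDensity u t x :=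
  add_nonneg (gradNormSq_nonneg _ _) (sq_nonneg _)

lemma gradNormSq_le_energyDensity (u : ℝ → Eucl n → F) (t : ℝ) (x : Eucl n) :
    gradNormSq (u t) x ≤ energyDensity u t x :=
  le_add_of_nonneg_right (sq_nonneg _)

lemma contDiff_uncurry_partialDeriv {u : ℝ → Eucl n → F}
    (hu : ContDiff ℝ 2 (uncurry u)) (i : Fin n) :
    ContDiff ℝ 1 (uncurry fun t => partialDeriv i (u t)) :=
  contDiff_fderiv_slice_apply hu contDiff_const

end Energy

section EnergyMonotonicity

variable {n : ℕ} {F : Type*} [NormedAddCommGroup F] [InnerProductSpace ℝ F] {u : ℝ → Eucl n → F}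

lemma contDiff_uncurry_energyDensity (hu : ContDiff ℝ 2 (uncurry u)) :
    ContDiff ℝ 1 (uncurry (energyDensity u)) :=
  (ContDiff.sum fun i _ => (contDiff_uncurry_partialDeriv hu i).norm_sq ℝ).add
    ((contDiff_timePartial hu).norm_sq ℝ)

namespace IsClassicalWave

lemma hasDerivAt_timePartial (hu : IsClassicalWave u) (t : ℝ) (x : Eucl n) :
    HasDerivAt (fun s => timePartial u s x) (coordLaplacian (u t) x) t :=
  hu.wave_eq t x ▸ WaveEquation.hasDerivAt_timePartial (contDiff_timePartial hu.contDiff) t x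

lemma contDiff_energyFlux (hu : IsClassicalWave u) (i : Fin n) (t : ℝ) :
    ContDiff ℝ 1 fun x => ⟪partialDeriv i (u t) x, timePartial u t x⟫ :=
  (contDiff_partialDeriv (contDiff_slice hu.contDiff t) i).inner ℝ
    (contDiff_slice (contDiff_timePartial hu.contDiff) t)

lemma hasDerivAt_energyDensity (hu : IsClassicalWave u) (t : ℝ) (x : Eucl n) :
    HasDerivAt (fun s => energyDensity u s x)
      (2 * coordDiv (fun i y => ⟪partialDeriv i (u t) y, timePartial u t y⟫) x) t := by
  have hgrad : HasDerivAt (fun s => gradNormSq (u s) x)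
      (∑ i, 2 * ⟪partialDeriv i (u t) x, partialDeriv i (timePartial u t) x⟫) t :=
    .fun_sum fun i _ => (hasDerivAt_fderiv_slice_apply hu.contDiff t x _).norm_sq
  refine (hgrad.add (hu.hasDerivAt_timePartial t x).norm_sq).congr_deriv ?_
  rw [coordDiv_inner_partialDeriv (contDiff_slice hu.contDiff t)
    ((contDiff_slice (contDiff_timePartial (m := 1) hu.contDiff) t).differentiable one_ne_zero x),
    real_inner_comm, ← Finset.mul_sum]
  ring

end IsClassicalWave

lemma contDiff_uncurry_coneCutoff {m : ℕ∞} (M : ℝ) :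
    ContDiff ℝ m (uncurry (coneCutoff (n := n) M)) :=
  smoothTransition.contDiff.comp
    ((contDiff_const.sub ((contDiff_bracket one_pos).comp contDiff_snd)).sub contDiff_fst)

lemma hasDerivAt_coneCutoff (M t : ℝ) (x : Eucl n) :
    HasDerivAt (fun s => coneCutoff M s x) (-deriv smoothTransition (M - bracket 1 x - t)) t := by
  have h := (smoothTransition.contDiff (n := 1)).differentiable one_ne_zero (M - bracket 1 x - t)
  exact (h.hasDerivAt.comp t ((hasDerivAt_id t).const_sub (M - bracket 1 x))).congr_deriv (by simp)

lemma partialDeriv_coneCutoff (M t : ℝ) (i : Fin n) (x : Eucl n) :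
    partialDeriv i (coneCutoff M t) x =
      -deriv smoothTransition (M - bracket 1 x - t) * partialDeriv i (bracket 1) x := by
  have h := (smoothTransition.contDiff (n := 1)).differentiable one_ne_zero (M - bracket 1 x - t)
  have hb : HasFDerivAt (bracket (n := n) 1) (fderiv ℝ (bracket 1) x) x :=
    ((contDiff_bracket one_pos (m := 1)).differentiable one_ne_zero x).hasFDerivAt
  have hc : HasFDerivAt (coneCutoff M t) _ x :=
    h.hasDerivAt.comp_hasFDerivAt x ((hb.const_sub M).sub_const t)
  simp [partialDeriv, hc.fderiv]

lemma coneCutoff_of_norm_ge {M t : ℝ} (ht : 0 ≤ t) {x : Eucl n} (hx : M ≤ ‖x‖) :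
    coneCutoff M t x = 0 :=
  smoothTransition.zero_of_nonpos (by linarith [norm_le_bracket 1 x])

lemma coneCutoff_of_norm_le {M t : ℝ} {x : Eucl n} (hx : ‖x‖ + t + 2 ≤ M) :
    coneCutoff M t x = 1 :=
  smoothTransition.one_of_one_le (by linarith [bracket_le_add_norm one_pos x])

lemma two_mul_sum_mul_inner_le {c : Fin n → ℝ} (hc : ∑ i, c i ^ 2 ≤ 1) (v : Fin n → F) (w : F) :
    2 * ∑ i, c i * ⟪v i, w⟫ ≤ ∑ i, ‖v i‖ ^ 2 + ‖w‖ ^ 2 := by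
  have hv : ‖∑ i, c i • v i‖ ^ 2 ≤ ∑ i, ‖v i‖ ^ 2 :=
    (norm_sum_smul_sq_le c v).trans
      (mul_le_of_le_one_left (Finset.sum_nonneg fun _ _ => sq_nonneg _) hc)
  calc 2 * ∑ i, c i * ⟪v i, w⟫ = 2 * ⟪∑ i, c i • v i, w⟫ := by
        simp [sum_inner, real_inner_smul_left]
    _ ≤ ‖∑ i, c i • v i‖ ^ 2 + ‖w‖ ^ 2 := by
        nlinarith [real_inner_le_norm (∑ i, c i • v i) w, sq_nonneg (‖∑ i, c i • v i‖ - ‖w‖)]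
    _ ≤ ∑ i, ‖v i‖ ^ 2 + ‖w‖ ^ 2 := by gcongr

namespace IsClassicalWave

/-- The energy flux through the mantle of the cone is outgoing, because the cone has slope at
most one. -/
lemma timePartial_coneCutoff_mul_energyDensity_le (hu : IsClassicalWave u) (M t : ℝ) (x : Eucl n) :
    timePartial (fun s y => coneCutoff M s y * energyDensity u s y) t x ≤
      coordDiv (fun i y => coneCutoff M t y * (2 * ⟪partialDeriv i (u t) y, timePartial u t y⟫))
        x := by
  set θ := deriv smoothTransition (M - bracket 1 x - t)
  have hθ : 0 ≤ θ := smoothTransition.monotone.deriv_nonneg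
  have htime : timePartial (fun s y => coneCutoff M s y * energyDensity u s y) t x = _ :=
    ((hasDerivAt_coneCutoff M t x).mul (hu.hasDerivAt_energyDensity t x)).deriv
  have hψ : DifferentiableAt ℝ (coneCutoff M t) x :=
    (contDiff_slice (contDiff_uncurry_coneCutoff (m := 1) M) t).differentiable one_ne_zero x
  have hV (i : Fin n) :
      DifferentiableAt ℝ (fun y => ⟪partialDeriv i (u t) y, timePartial u t y⟫) x :=
    (hu.contDiff_energyFlux i t).differentiable one_ne_zero x
  have hflux : 2 * ∑ i, partialDeriv i (bracket 1) x * ⟪partialDeriv i (u t) x, timePartial u t x⟫ ≤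
      energyDensity u t x :=
    two_mul_sum_mul_inner_le (by simpa [gradNormSq] using gradNormSq_bracket_le_one one_pos x) _ _
  rw [htime, coordDiv_mul hψ fun i => (hV i).const_mul 2, coordDiv_const_mul 2 hV]
  simp only [partialDeriv_coneCutoff, mul_assoc, mul_left_comm _ (2 : ℝ), ← Finset.mul_sum]
  linear_combination θ * hflux

lemma contDiff_uncurry_coneCutoff_mul_energyDensity (hu : IsClassicalWave u) (M : ℝ) :
    ContDiff ℝ 1 (uncurry fun t x => coneCutoff M t x * energyDensity u t x) :=
  (contDiff_uncurry_coneCutoff (m := 1) M).mul (contDiff_uncurry_energyDensity hu.contDiff)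

lemma setIntegral_coneCutoff_mul_energyDensity_le (hu : IsClassicalWave u) (M : ℝ) {T : ℝ}
    (hT : 0 ≤ T) :
    ∫ x in Metric.closedBall 0 M, coneCutoff M T x * energyDensity u T x ≤
      ∫ x in Metric.closedBall 0 M, coneCutoff M 0 x * energyDensity u 0 x := by
  have hK : IsCompact (Metric.closedBall (0 : Eucl n) M) := isCompact_closedBall 0 M
  have hG := hu.contDiff_uncurry_coneCutoff_mul_energyDensity M
  rw [← sub_nonpos, ← intervalIntegral_setIntegral_timePartial hG hK,
    intervalIntegral.integral_of_le hT]
  refine setIntegral_nonpos measurableSet_Ioc fun t ht => ?_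
  refine setIntegral_nonpos_of_le_coordDiv hK
    ((contDiff_timePartial (m := 0) hG).continuous.uncurry_left t)
    (fun i => (contDiff_slice (contDiff_uncurry_coneCutoff (m := 1) M) t).mul
      (contDiff_const.mul (hu.contDiff_energyFlux i t)))
    (fun i x hx => ?_) (hu.timePartial_coneCutoff_mul_energyDensity_le M t)
  have hxM : M < ‖x‖ := not_le.1 (mt mem_closedBall_zero_iff.2 hx)
  rw [coneCutoff_of_norm_ge ht.1.le hxM.le, zero_mul]

theorem energy_le (hu : IsClassicalWave u) {T : ℝ} (hT : 0 ≤ T) : energy u T ≤ energy u 0 := by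
  have hen : Continuous (uncurry (energyDensity u)) :=
    (contDiff_uncurry_energyDensity hu.contDiff).continuous
  refine le_of_tendsto' ((aecover_closedBall (x := (0 : Eucl n))
    tendsto_natCast_atTop_atTop).lintegral_tendsto_of_countably_generated
    (hen.uncurry_left T).measurable.ennreal_ofReal.aemeasurable) fun m => ?_
  set M : ℝ := m + T + 2
  set K : Set (Eucl n) := Metric.closedBall 0 M
  have hlintegral (t : ℝ) : ENNReal.ofReal (∫ x in K, coneCutoff M t x * energyDensity u t x) =
      ∫⁻ x in K, ENNReal.ofReal (coneCutoff M t x * energyDensity u t x) :=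
    ofReal_integral_eq_lintegral_ofReal
      (integrableOn_slice (hu.contDiff_uncurry_coneCutoff_mul_energyDensity M).continuous
        (isCompact_closedBall 0 M) t)
      (.of_forall fun x => mul_nonneg (smoothTransition.nonneg _) (energyDensity_nonneg u t x))
  calc ∫⁻ x in Metric.closedBall 0 m, ENNReal.ofReal (energyDensity u T x)
      = ∫⁻ x in Metric.closedBall 0 m, ENNReal.ofReal (coneCutoff M T x * energyDensity u T x) :=
        setLIntegral_congr_fun measurableSet_closedBall fun x hx => by
          have hx' : ‖x‖ + T + 2 ≤ M := by
            simpa [M] using mem_closedBall_zero_iff.1 hx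
          rw [coneCutoff_of_norm_le hx', one_mul]
    _ ≤ ∫⁻ x in K, ENNReal.ofReal (coneCutoff M T x * energyDensity u T x) :=
        lintegral_mono_set (Metric.closedBall_subset_closedBall (by simp only [M]; linarith))
    _ ≤ ∫⁻ x in K, ENNReal.ofReal (coneCutoff M 0 x * energyDensity u 0 x) := by
        rw [← hlintegral, ← hlintegral]
        exact ENNReal.ofReal_le_ofReal (hu.setIntegral_coneCutoff_mul_energyDensity_le M hT)
    _ ≤ ∫⁻ x, ENNReal.ofReal (coneCutoff M 0 x * energyDensity u 0 x) :=
        setLIntegral_le_lintegral _ _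
    _ ≤ energy u 0 := lintegral_mono fun x => ENNReal.ofReal_le_ofReal
        (mul_le_of_le_one_left (energyDensity_nonneg u 0 x) (smoothTransition.le_one _))

end IsClassicalWave

end EnergyMonotonicity

section Weight

variable {n : ℕ} {R : ℝ}

/-- The weight `(R² + |x|²)^{-1/2}` of the Morawetz multiplier: a smooth, bounded substitute for
`1/|x|` at scale `R`. -/
def morawetzWeight (R : ℝ) (x : Eucl n) : ℝ := (bracket R x)⁻¹

lemma morawetzWeight_pos (hR : 0 < R) (x : Eucl n) : 0 < morawetzWeight R x :=
  inv_pos.2 (bracket_pos hR x)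

lemma morawetzWeight_sq_mul (hR : 0 < R) (x : Eucl n) :
    morawetzWeight R x ^ 2 * (R ^ 2 + ‖x‖ ^ 2) = 1 := by
  rw [← bracket_sq, morawetzWeight, ← mul_pow, inv_mul_cancel₀ (bracket_pos hR x).ne', one_pow]

lemma morawetzWeight_mul_norm_le_one (hR : 0 < R) (x : Eucl n) : morawetzWeight R x * ‖x‖ ≤ 1 :=
  (inv_mul_le_one₀ (bracket_pos hR x)).2 (norm_le_bracket R x)

lemma morawetzWeight_le_inv_of_le_norm {ρ : ℝ} (hρ : 0 < ρ) {x : Eucl n} (hx : ρ ≤ ‖x‖) :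
    morawetzWeight R x ≤ ρ⁻¹ :=
  inv_anti₀ hρ (hx.trans (norm_le_bracket R x))

lemma contDiff_morawetzWeight (hR : 0 < R) {m : WithTop ℕ∞} :
    ContDiff ℝ m (morawetzWeight (n := n) R) :=
  (contDiff_bracket hR).inv fun x => (bracket_pos hR x).ne'

lemma differentiable_morawetzWeight (hR : 0 < R) : Differentiable ℝ (morawetzWeight (n := n) R) :=
  (contDiff_morawetzWeight hR (m := 1)).differentiable one_ne_zero

lemma partialDeriv_morawetzWeight (hR : 0 < R) (i : Fin n) (x : Eucl n) :
    partialDeriv i (morawetzWeight R) x = -morawetzWeight R x ^ 3 * x i := by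
  have hb : HasFDerivAt (bracket (n := n) R) (fderiv ℝ (bracket R) x) x :=
    ((contDiff_bracket hR (m := 1)).differentiable one_ne_zero x).hasFDerivAt
  have hw : HasFDerivAt (morawetzWeight R) _ x :=
    (hasDerivAt_inv (bracket_pos hR x).ne').comp_hasFDerivAt x hb
  have hi : partialDeriv i (morawetzWeight R) x =
      -(bracket R x ^ 2)⁻¹ * partialDeriv i (bracket R) x := by
    simp [partialDeriv, hw.fderiv]
  rw [hi, partialDeriv_bracket hR, morawetzWeight]
  ring

lemma eulerDeriv_morawetzWeight (hR : 0 < R) (x : Eucl n) :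
    eulerDeriv (morawetzWeight R) x = -morawetzWeight R x ^ 3 * ‖x‖ ^ 2 := by
  simp only [eulerDeriv_eq_sum, partialDeriv_morawetzWeight hR, EuclideanSpace.real_norm_sq_eq,
    Finset.mul_sum, smul_eq_mul]
  exact Finset.sum_congr rfl fun i _ => by ring

lemma coordLaplacian_morawetzWeight (hR : 0 < R) (x : Eucl n) :
    coordLaplacian (morawetzWeight R) x =
      3 * morawetzWeight R x ^ 5 * ‖x‖ ^ 2 - n * morawetzWeight R x ^ 3 := by
  have hw : DifferentiableAt ℝ (morawetzWeight R) x := differentiable_morawetzWeight hR x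
  have hd : DifferentiableAt ℝ (fun y => -morawetzWeight R y ^ 3) x := (hw.pow 3).neg
  have hcube : eulerDeriv (fun y => -morawetzWeight R y ^ 3) x =
      -(3 * morawetzWeight R x ^ 2 * eulerDeriv (morawetzWeight R) x) := by
    simp [eulerDeriv, (hw.hasFDerivAt.pow 3).fderiv]
  calc coordLaplacian (morawetzWeight R) x
      = coordDiv (fun i y => -morawetzWeight R y ^ 3 * y i) x := by
        simp only [coordLaplacian, coordDiv, funext (partialDeriv_morawetzWeight hR _)]
    _ = 3 * morawetzWeight R x ^ 5 * ‖x‖ ^ 2 - n * morawetzWeight R x ^ 3 := by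
        rw [coordDiv_mul_coord hd, hcube, eulerDeriv_morawetzWeight hR]
        ring

lemma coordLaplacian_morawetzWeight_nonpos (hn : 3 ≤ n) (hR : 0 < R) (x : Eucl n) :
    coordLaplacian (morawetzWeight R) x ≤ 0 := by
  have hw := morawetzWeight_pos hR x
  have hn' : (3 : ℝ) ≤ n := by exact_mod_cast hn
  calc coordLaplacian (morawetzWeight R) x
      = 3 * morawetzWeight R x ^ 3 *
          (morawetzWeight R x ^ 2 * (R ^ 2 + ‖x‖ ^ 2) - morawetzWeight R x ^ 2 * R ^ 2) -
          n * morawetzWeight R x ^ 3 := by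
        rw [coordLaplacian_morawetzWeight hR]; ring
    _ = -(3 * R ^ 2 * morawetzWeight R x ^ 5) - (n - 3) * morawetzWeight R x ^ 3 := by
        rw [morawetzWeight_sq_mul hR]; ring
    _ ≤ 0 := by
        have := mul_nonneg (sub_nonneg.2 hn') (pow_pos hw 3).le
        have : 0 < R ^ 2 * morawetzWeight R x ^ 5 := by positivity
        linarith

variable {F : Type*} [NormedAddCommGroup F] [InnerProductSpace ℝ F]

lemma morawetzWeight_sq_mul_norm_eulerDeriv_sq_le (hR : 0 < R) (f : Eucl n → F) (x : Eucl n) :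
    morawetzWeight R x ^ 2 * ‖eulerDeriv f x‖ ^ 2 ≤ gradNormSq f x :=
  calc morawetzWeight R x ^ 2 * ‖eulerDeriv f x‖ ^ 2
      ≤ morawetzWeight R x ^ 2 * (‖x‖ ^ 2 * gradNormSq f x) := by
        gcongr; exact norm_fderiv_apply_sq_le f x x
    _ = (morawetzWeight R x * ‖x‖) ^ 2 * gradNormSq f x := by ring
    _ ≤ gradNormSq f x := mul_le_of_le_one_left (gradNormSq_nonneg f x)
        (pow_le_one₀ (mul_nonneg (morawetzWeight_pos hR x).le (norm_nonneg x))
          (morawetzWeight_mul_norm_le_one hR x))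

lemma hardy_integrand_le_coordDiv (hn : 3 ≤ n) (hR : 0 < R) {g : Eucl n → F} (hg : ContDiff ℝ 1 g)
    (x : Eucl n) :
    morawetzWeight R x ^ 2 * ‖g x‖ ^ 2 - 4 * gradNormSq g x ≤
      coordDiv (fun i y => 2 * (morawetzWeight R y ^ 2 * ‖g y‖ ^ 2) * y i) x := by
  set w := morawetzWeight R x
  have hn' : (3 : ℝ) ≤ n := by exact_mod_cast hn
  have hwd : DifferentiableAt ℝ (morawetzWeight R) x := differentiable_morawetzWeight hR x
  have hgd : DifferentiableAt ℝ g x := hg.differentiable one_ne_zero x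
  have hd : DifferentiableAt ℝ (fun y => 2 * (morawetzWeight R y ^ 2 * ‖g y‖ ^ 2)) x :=
    ((hwd.pow 2).mul (hgd.norm_sq ℝ)).const_mul 2
  have heuler : eulerDeriv (fun y => 2 * (morawetzWeight R y ^ 2 * ‖g y‖ ^ 2)) x =
      4 * (w * eulerDeriv (morawetzWeight R) x * ‖g x‖ ^ 2 + w ^ 2 * ⟪g x, eulerDeriv g x⟫) := by
    have h : HasFDerivAt (fun y => 2 * (morawetzWeight R y ^ 2 * ‖g y‖ ^ 2)) _ x :=
      ((hwd.hasFDerivAt.pow 2).mul hgd.hasFDerivAt.norm_sq).const_mul 2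
    simp only [eulerDeriv, h.fderiv, Nat.add_one_sub_one, pow_one, smul_apply,
      add_apply, ContinuousLinearMap.comp_apply, innerSL_apply_apply,
      smul_eq_mul, nsmul_eq_mul, Nat.cast_ofNat, w]
    ring
  have hcross : -(‖g x‖ ^ 2 / 4 + ‖eulerDeriv g x‖ ^ 2) ≤ ⟪g x, eulerDeriv g x⟫ := by
    nlinarith [abs_le.1 (abs_real_inner_le_norm (g x) (eulerDeriv g x)),
      sq_nonneg (‖g x‖ / 2 - ‖eulerDeriv g x‖)]
  have hgrad : w ^ 2 * ‖eulerDeriv g x‖ ^ 2 ≤ gradNormSq g x :=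
    morawetzWeight_sq_mul_norm_eulerDeriv_sq_le hR g x
  have hw : w ^ 2 * ‖x‖ ^ 2 = 1 - w ^ 2 * R ^ 2 := by
    rw [← morawetzWeight_sq_mul hR x]; ring
  have hnonneg : 0 ≤ (2 * (n - 3) + 4 * w ^ 2 * R ^ 2) * (w ^ 2 * ‖g x‖ ^ 2) := by
    have := sub_nonneg.2 hn'
    positivity
  rw [coordDiv_mul_coord hd, heuler, eulerDeriv_morawetzWeight hR]
  linear_combination 4 * w ^ 2 * hcross + 4 * hgrad + hnonneg +
    4 * w ^ 2 * ‖g x‖ ^ 2 * hw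

theorem setIntegral_morawetzWeight_sq_mul_le (hn : 3 ≤ n) (hR : 0 < R) {g : Eucl n → F}
    (hg : ContDiff ℝ 1 g) {K : Set (Eucl n)} (hK : IsCompact K) (hgK : ∀ x ∉ K, g x = 0) :
    ∫ x in K, morawetzWeight R x ^ 2 * ‖g x‖ ^ 2 ≤ 4 * ∫ x in K, gradNormSq g x := by
  have hw : ContDiff ℝ 1 (morawetzWeight (n := n) R) := contDiff_morawetzWeight hR
  have hmass : Continuous fun x => morawetzWeight R x ^ 2 * ‖g x‖ ^ 2 := by fun_prop
  have hgrad : Continuous (gradNormSq g) := (contDiff_gradNormSq (m := 0) hg).continuous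
  rw [← sub_nonpos, ← integral_const_mul, ← integral_sub
    (hmass.continuousOn.integrableOn_compact hK)
    ((hgrad.const_mul 4).continuousOn.integrableOn_compact hK)]
  refine setIntegral_nonpos_of_le_coordDiv hK (hmass.sub (hgrad.const_mul 4)) (fun i => ?_)
    (fun i x hx => by simp [hgK x hx]) (hardy_integrand_le_coordDiv hn hR hg)
  have := hg.norm_sq ℝ
  fun_prop

end Weight

section Cutoff

variable {n : ℕ}

/-- `χ` is a cutoff function at scale `ρ`: it equals `1` on the ball of radius `ρ`, vanishes
outside the ball of radius `2ρ`, and its derivatives obey the bounds dictated by scaling, with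
constant `K`. -/
structure IsSpatialCutoff (K ρ : ℝ) (χ : Eucl n → ℝ) : Prop where
  contDiff : ContDiff ℝ 2 χ
  nonneg : ∀ x, 0 ≤ χ x
  le_one : ∀ x, χ x ≤ 1
  eq_one : ∀ x, ‖x‖ ≤ ρ → χ x = 1
  eq_zero : ∀ x, 2 * ρ ≤ ‖x‖ → χ x = 0
  gradNormSq_le : ∀ x, gradNormSq χ x ≤ (K / ρ) ^ 2
  abs_coordLaplacian_le : ∀ x, |coordLaplacian χ x| ≤ K / ρ ^ 2

lemma partialDeriv_comp_smul (c : ℝ) (f : Eucl n → ℝ) (i : Fin n) (x : Eucl n) :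
    partialDeriv i (fun y => f (c • y)) x = c * partialDeriv i f (c • x) := by
  unfold partialDeriv
  rw [fderiv_comp_smul, smul_apply, smul_eq_mul]

lemma partialDeriv_const_mul (c : ℝ) (f : Eucl n → ℝ) (i : Fin n) (x : Eucl n) :
    partialDeriv i (fun y => c * f y) x = c * partialDeriv i f x := by
  have h : fderiv ℝ (fun y => c * f y) = c • fderiv ℝ f := fderiv_const_smul_field c
  simp [partialDeriv, h]

lemma gradNormSq_comp_smul (c : ℝ) (f : Eucl n → ℝ) (x : Eucl n) :
    gradNormSq (fun y => f (c • y)) x = c ^ 2 * gradNormSq f (c • x) := by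
  simp [gradNormSq, partialDeriv_comp_smul, mul_pow, Finset.mul_sum]

lemma coordLaplacian_comp_smul (c : ℝ) (f : Eucl n → ℝ) (x : Eucl n) :
    coordLaplacian (fun y => f (c • y)) x = c ^ 2 * coordLaplacian f (c • x) := by
  simp only [coordLaplacian, funext (partialDeriv_comp_smul c f _), partialDeriv_const_mul,
    partialDeriv_comp_smul, Finset.mul_sum, sq, mul_assoc]

lemma tsupport_partialDeriv_subset (i : Fin n) (f : Eucl n → ℝ) :
    tsupport (partialDeriv i f) ⊆ tsupport f :=
  tsupport_fderiv_apply_subset ℝ _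

lemma exists_isSpatialCutoff (n : ℕ) :
    ∃ K : ℝ, 0 < K ∧ ∀ ρ : ℝ, 0 < ρ → ∃ χ : Eucl n → ℝ, IsSpatialCutoff K ρ χ := by
  let b : ContDiffBump (0 : Eucl n) := ⟨1, 2, one_pos, one_lt_two⟩
  have hb : ContDiff ℝ 2 b := b.contDiff
  have hgrad : Continuous (gradNormSq b) := (contDiff_gradNormSq (m := 1) hb).continuous
  have hlap : Continuous (coordLaplacian b) := continuous_finsetSum _ fun i _ =>
    (contDiff_partialDeriv (m := 0) (contDiff_partialDeriv (m := 1) hb i) i).continuous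
  have hsupp {f : Eucl n → ℝ} {x : Eucl n} (hx : x ∉ tsupport f) (i : Fin n) :
      partialDeriv i f x = 0 :=
    image_eq_zero_of_notMem_tsupport fun h => hx (tsupport_partialDeriv_subset i f h)
  obtain ⟨C, hC⟩ := hgrad.bounded_above_of_compact_support <|
    .intro b.hasCompactSupport fun x hx => by simp [gradNormSq, hsupp hx]
  obtain ⟨D, hD⟩ := hlap.bounded_above_of_compact_support <|
    .intro b.hasCompactSupport fun x hx => Finset.sum_eq_zero fun i _ =>
      hsupp (fun h => hx (tsupport_partialDeriv_subset i b h)) i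
  have hC0 : 0 ≤ C := (norm_nonneg _).trans (hC 0)
  have hD0 : 0 ≤ D := (norm_nonneg _).trans (hD 0)
  refine ⟨1 + C + D, by positivity, fun ρ hρ => ⟨fun x => b (ρ⁻¹ • x), ?_⟩⟩
  have hnorm (x : Eucl n) : ‖ρ⁻¹ • x‖ = ‖x‖ / ρ := by
    rw [norm_smul, norm_inv, Real.norm_of_nonneg hρ.le, inv_mul_eq_div]
  refine ⟨hb.comp (contDiff_const_smul _), fun x => b.nonneg, fun x => b.le_one, fun x hx => ?_,
    fun x hx => ?_, fun x => ?_, fun x => ?_⟩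
  · exact b.one_of_mem_closedBall (by simpa [hnorm, b] using (div_le_one hρ).2 hx)
  · exact b.zero_of_le_dist (by simpa [hnorm, b] using (le_div_iff₀ hρ).2 hx)
  · rw [gradNormSq_comp_smul, inv_pow, inv_mul_eq_div, div_pow]
    gcongr
    nlinarith [(le_abs_self _).trans (hC (ρ⁻¹ • x))]
  · rw [coordLaplacian_comp_smul, inv_pow, inv_mul_eq_div, abs_div, abs_of_pos (pow_pos hρ 2)]
    gcongr
    linarith [(Real.norm_eq_abs _).ge.trans (hD (ρ⁻¹ • x))]

namespace IsSpatialCutoff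

variable {K ρ : ℝ} {χ : Eucl n → ℝ}

lemma eventuallyEq_one (hχ : IsSpatialCutoff K ρ χ) {x : Eucl n} (hx : ‖x‖ < ρ) :
    χ =ᶠ[𝓝 x] fun _ => 1 :=
  Filter.mem_of_superset (continuous_norm.isOpen_preimage _ isOpen_Iio |>.mem_nhds hx)
    fun y hy => hχ.eq_one y (le_of_lt hy)

lemma partialDeriv_eq_zero (hχ : IsSpatialCutoff K ρ χ) {x : Eucl n} (hx : ‖x‖ < ρ) (i : Fin n) :
    partialDeriv i χ x = 0 := by
  simp [partialDeriv, (hχ.eventuallyEq_one hx).fderiv_eq]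

lemma coordLaplacian_eq_zero (hχ : IsSpatialCutoff K ρ χ) {x : Eucl n} (hx : ‖x‖ < ρ) :
    coordLaplacian χ x = 0 := by
  have h (i : Fin n) : partialDeriv i χ =ᶠ[𝓝 x] fun _ => 0 :=
    Filter.mem_of_superset (continuous_norm.isOpen_preimage _ isOpen_Iio |>.mem_nhds hx)
      fun y hy => hχ.partialDeriv_eq_zero hy i
  exact Finset.sum_eq_zero fun i _ => by simp [partialDeriv, (h i).fderiv_eq]

end IsSpatialCutoff

end Cutoff

section Multiplier

variable {n : ℕ} {F : Type*} [NormedAddCommGroup F] [InnerProductSpace ℝ F]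

/-- The Morawetz multiplier `k (x·∇f + (n-1)/2 f)` with weight `k`. -/
def morawetzMultiplier (k : Eucl n → ℝ) (f : Eucl n → F) (x : Eucl n) : F :=
  k x • (eulerDeriv f x + (((n : ℝ) - 1) / 2) • f x)

/-- The spatial flux produced by the Morawetz multiplier; `f` and `g` stand for `u` and `∂ₜu`. -/
def morawetzFlux (k : Eucl n → ℝ) (f g : Eucl n → F) (i : Fin n) (x : Eucl n) : ℝ :=
  ⟪partialDeriv i f x, morawetzMultiplier k f x⟫ +
    (1 / 2 * (k x * (‖g x‖ ^ 2 - gradNormSq f x) * x i) +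
      -((n : ℝ) - 1) / 4 * (‖f x‖ ^ 2 * partialDeriv i k x))

/-- The spacetime density that the Morawetz multiplier controls; `f` and `g` stand for `u` and
`∂ₜu`. -/
def morawetzBulk (k : Eucl n → ℝ) (f g : Eucl n → F) (x : Eucl n) : ℝ :=
  k x / 2 * (gradNormSq f x + ‖g x‖ ^ 2) +
    ∑ i, partialDeriv i k x * ⟪partialDeriv i f x, eulerDeriv f x⟫ +
    eulerDeriv k x / 2 * (‖g x‖ ^ 2 - gradNormSq f x) -
    ((n : ℝ) - 1) / 4 * coordLaplacian k x * ‖f x‖ ^ 2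

variable {k : Eucl n → ℝ} {f g : Eucl n → F} {m : WithTop ℕ∞}

lemma contDiff_morawetzMultiplier (hk : ContDiff ℝ m k) (hf : ContDiff ℝ (m + 1) f) :
    ContDiff ℝ m (morawetzMultiplier k f) :=
  hk.smul ((contDiff_eulerDeriv hf).add (contDiff_const.smul (hf.of_le le_self_add)))

lemma contDiff_morawetzFlux (hk : ContDiff ℝ 2 k) (hf : ContDiff ℝ 2 f) (hg : ContDiff ℝ 1 g)
    (i : Fin n) : ContDiff ℝ 1 (morawetzFlux k f g i) := by
  have hk₁ : ContDiff ℝ 1 k := hk.of_le one_le_two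
  have hG : ContDiff ℝ 1 (gradNormSq f) := contDiff_gradNormSq hf
  refine ((contDiff_partialDeriv hf i).inner ℝ (contDiff_morawetzMultiplier hk₁ hf)).add
    (ContDiff.add ?_ (contDiff_const.mul
      (((hf.of_le one_le_two).norm_sq ℝ).mul (contDiff_partialDeriv hk i))))
  exact contDiff_const.mul ((hk₁.mul ((hg.norm_sq ℝ).sub hG)).mul (by fun_prop))

lemma eulerDeriv_norm_sq (hg : Differentiable ℝ g) (x : Eucl n) :
    eulerDeriv (fun y => ‖g y‖ ^ 2) x = 2 * ⟪g x, eulerDeriv g x⟫ :=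
  fderiv_norm_sq_apply (hg x) x

lemma eulerDeriv_gradNormSq (hf : ContDiff ℝ 2 f) (x : Eucl n) :
    eulerDeriv (gradNormSq f) x =
      2 * ∑ i, ⟪partialDeriv i f x, eulerDeriv (partialDeriv i f) x⟫ := by
  have hd (i : Fin n) : Differentiable ℝ (partialDeriv i f) :=
    (contDiff_partialDeriv (m := 1) hf i).differentiable one_ne_zero
  have hsum : fderiv ℝ (gradNormSq f) x = ∑ i, fderiv ℝ (fun y => ‖partialDeriv i f y‖ ^ 2) x :=
    fderiv_fun_sum fun i _ => (hd i x).norm_sq ℝ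
  simp only [eulerDeriv, hsum, sum_apply, fderiv_norm_sq_apply (hd _ x),
    Finset.mul_sum]

lemma inner_morawetzMultiplier_self (hg : Differentiable ℝ g) (x : Eucl n) :
    ⟪g x, morawetzMultiplier k g x⟫ =
      k x / 2 * (eulerDeriv (fun y => ‖g y‖ ^ 2) x + ((n : ℝ) - 1) * ‖g x‖ ^ 2) := by
  rw [eulerDeriv_norm_sq hg, morawetzMultiplier, real_inner_smul_right, inner_add_right,
    real_inner_smul_right, real_inner_self_eq_norm_sq]
  ring

lemma sum_inner_partialDeriv_morawetzMultiplier (hk : Differentiable ℝ k) (hf : ContDiff ℝ 2 f)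
    (x : Eucl n) :
    ∑ i, ⟪partialDeriv i f x, partialDeriv i (morawetzMultiplier k f) x⟫ =
      ∑ i, partialDeriv i k x * ⟪partialDeriv i f x, eulerDeriv f x⟫ +
      ((n : ℝ) - 1) / 2 * ∑ i, partialDeriv i k x * ⟪partialDeriv i f x, f x⟫ +
      k x / 2 * (((n : ℝ) + 1) * gradNormSq f x + eulerDeriv (gradNormSq f) x) := by
  have hfd : Differentiable ℝ f := hf.differentiable two_ne_zero
  have hed : Differentiable ℝ (eulerDeriv f) :=
    (contDiff_eulerDeriv (m := 1) hf).differentiable one_ne_zero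
  have hpartial (i : Fin n) : partialDeriv i (morawetzMultiplier k f) x =
      partialDeriv i k x • (eulerDeriv f x + (((n : ℝ) - 1) / 2) • f x) +
      k x • ((((n : ℝ) + 1) / 2) • partialDeriv i f x + eulerDeriv (partialDeriv i f) x) := by
    have hscale : partialDeriv i (fun y => (((n : ℝ) - 1) / 2) • f y) x =
        (((n : ℝ) - 1) / 2) • partialDeriv i f x := by
      simp [partialDeriv, fderiv_fun_const_smul (hfd x)]
    have heuler : partialDeriv i (eulerDeriv f) x =
        partialDeriv i f x + eulerDeriv (partialDeriv i f) x := fderiv_eulerDeriv hf x _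
    have hsum : DifferentiableAt ℝ (fun y => eulerDeriv f y + (((n : ℝ) - 1) / 2) • f y) x :=
      (hed x).add ((hfd x).const_smul _)
    unfold morawetzMultiplier
    rw [partialDeriv_smul (hk x) hsum,
      partialDeriv_add (hed x) ((hfd x).fun_const_smul _), hscale, heuler]
    module
  simp only [hpartial, inner_add_right, real_inner_smul_right, real_inner_self_eq_norm_sq,
    eulerDeriv_gradNormSq hf, gradNormSq, Finset.mul_sum, ← Finset.sum_add_distrib]
  exact Finset.sum_congr rfl fun i _ => by ring

lemma coordDiv_lagrangian_mul_coord (hk : Differentiable ℝ k) (hf : ContDiff ℝ 2 f)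
    (hg : Differentiable ℝ g) (x : Eucl n) :
    coordDiv (fun i y => k y * (‖g y‖ ^ 2 - gradNormSq f y) * y i) x =
      eulerDeriv k x * (‖g x‖ ^ 2 - gradNormSq f x) +
        k x * (eulerDeriv (fun y => ‖g y‖ ^ 2) x - eulerDeriv (gradNormSq f) x) +
        n * (k x * (‖g x‖ ^ 2 - gradNormSq f x)) := by
  have hd : DifferentiableAt ℝ (fun y => ‖g y‖ ^ 2) x := (hg x).norm_sq ℝ
  have hG : DifferentiableAt ℝ (gradNormSq f) x :=
    (contDiff_gradNormSq (m := 1) hf).differentiable one_ne_zero x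
  rw [coordDiv_mul_coord ((hk x).fun_mul (hd.fun_sub hG))]
  simp only [eulerDeriv]
  rw [fderiv_fun_mul (hk x) (hd.fun_sub hG), fderiv_fun_sub hd hG]
  simp only [add_apply, smul_apply, sub_apply, smul_eq_mul]
  ring

lemma coordDiv_norm_sq_mul_partialDeriv (hk : ContDiff ℝ 2 k) (hf : Differentiable ℝ f)
    (x : Eucl n) :
    coordDiv (fun i y => ‖f y‖ ^ 2 * partialDeriv i k y) x =
      2 * ∑ i, partialDeriv i k x * ⟪partialDeriv i f x, f x⟫ + coordLaplacian k x * ‖f x‖ ^ 2 := by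
  have hkd (i : Fin n) : DifferentiableAt ℝ (partialDeriv i k) x :=
    (contDiff_partialDeriv (m := 1) hk i).differentiable one_ne_zero x
  have hsq (i : Fin n) :
      partialDeriv i (fun y => ‖f y‖ ^ 2) x = 2 * ⟪partialDeriv i f x, f x⟫ := by
    rw [real_inner_comm]; exact fderiv_norm_sq_apply (hf x) _
  rw [coordDiv_mul ((hf x).norm_sq ℝ) hkd, coordDiv, ← coordLaplacian, Finset.mul_sum]
  simp only [hsq, mul_comm, mul_assoc]

/-- On a wave `u` with `f = u t` and `g = ∂ₜu t`, the two inner products add up to the time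
derivative of the momentum `⟪∂ₜu, Nu⟫` attached to the multiplier `N`. -/
lemma coordDiv_morawetzFlux (hk : ContDiff ℝ 2 k) (hf : ContDiff ℝ 2 f) (hg : ContDiff ℝ 1 g)
    (x : Eucl n) :
    coordDiv (morawetzFlux k f g) x =
      ⟪coordLaplacian f x, morawetzMultiplier k f x⟫ + ⟪g x, morawetzMultiplier k g x⟫ +
        morawetzBulk k f g x := by
  have hk₁ : ContDiff ℝ 1 k := hk.of_le one_le_two
  have hN : ContDiff ℝ 1 (morawetzMultiplier k f) := contDiff_morawetzMultiplier hk₁ hf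
  have hgrad (i : Fin n) :
      DifferentiableAt ℝ (fun y => ⟪partialDeriv i f y, morawetzMultiplier k f y⟫) x :=
    ((contDiff_partialDeriv hf i).inner ℝ hN).differentiable one_ne_zero x
  have hlagr (i : Fin n) :
      DifferentiableAt ℝ (fun y => k y * (‖g y‖ ^ 2 - gradNormSq f y) * y i) x :=
    ((hk₁.mul ((hg.norm_sq ℝ).sub (contDiff_gradNormSq hf))).differentiable one_ne_zero x).mul
      (differentiable_coord i x)
  have hzero (i : Fin n) : DifferentiableAt ℝ (fun y => ‖f y‖ ^ 2 * partialDeriv i k y) x :=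
    (((hf.of_le one_le_two).norm_sq ℝ).mul (contDiff_partialDeriv hk i)).differentiable
      one_ne_zero x
  unfold morawetzFlux
  rw [coordDiv_add hgrad fun i => ((hlagr i).const_mul _).fun_add ((hzero i).const_mul _),
    coordDiv_add (fun i => (hlagr i).const_mul _) fun i => (hzero i).const_mul _,
    coordDiv_const_mul _ hlagr, coordDiv_const_mul _ hzero,
    coordDiv_inner_partialDeriv hf (hN.differentiable one_ne_zero x),
    coordDiv_lagrangian_mul_coord (hk₁.differentiable one_ne_zero) hf
      (hg.differentiable one_ne_zero),
    coordDiv_norm_sq_mul_partialDeriv hk (hf.differentiable two_ne_zero),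
    sum_inner_partialDeriv_morawetzMultiplier (hk₁.differentiable one_ne_zero) hf,
    inner_morawetzMultiplier_self (hg.differentiable one_ne_zero), morawetzBulk]
  ring

end Multiplier

section LocalizedWeight

variable {n : ℕ} {F : Type*} [NormedAddCommGroup F] [InnerProductSpace ℝ F]
  {K R ρ : ℝ} {χ : Eucl n → ℝ}

lemma coordLaplacian_mul {a b : Eucl n → ℝ} (ha : ContDiff ℝ 2 a) (hb : ContDiff ℝ 2 b)
    (x : Eucl n) :
    coordLaplacian (fun y => a y * b y) x = a x * coordLaplacian b x +
      2 * ∑ i, partialDeriv i a x * partialDeriv i b x + coordLaplacian a x * b x := by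
  have had : Differentiable ℝ a := ha.differentiable two_ne_zero
  have hbd : Differentiable ℝ b := hb.differentiable two_ne_zero
  have hpd {c : Eucl n → ℝ} (hc : ContDiff ℝ 2 c) (i : Fin n) :
      Differentiable ℝ (partialDeriv i c) :=
    (contDiff_partialDeriv (m := 1) hc i).differentiable one_ne_zero
  have hpartial (i : Fin n) : partialDeriv i (fun y => a y * b y) =
      fun y => partialDeriv i a y * b y + a y * partialDeriv i b y :=
    funext fun y => partialDeriv_mul (had y) (hbd y) i
  have hsecond (i : Fin n) : partialDeriv i (partialDeriv i fun y => a y * b y) x =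
      a x * partialDeriv i (partialDeriv i b) x + 2 * (partialDeriv i a x * partialDeriv i b x) +
        partialDeriv i (partialDeriv i a) x * b x := by
    rw [hpartial, partialDeriv_add ((hpd ha i x).fun_mul (hbd x)) ((had x).fun_mul (hpd hb i x)),
      partialDeriv_mul (hpd ha i x) (hbd x), partialDeriv_mul (had x) (hpd hb i x)]
    ring
  simp only [coordLaplacian, hsecond, Finset.sum_add_distrib, Finset.mul_sum, Finset.sum_mul]

/-- The Morawetz weight cut off by `χ`. -/
def localizedWeight (R : ℝ) (χ : Eucl n → ℝ) (x : Eucl n) : ℝ := χ x * morawetzWeight R x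

lemma contDiff_localizedWeight (hR : 0 < R) (hχ : ContDiff ℝ 2 χ) :
    ContDiff ℝ 2 (localizedWeight R χ) :=
  hχ.mul (contDiff_morawetzWeight hR)

lemma partialDeriv_localizedWeight (hR : 0 < R) (hχ : ContDiff ℝ 2 χ) (i : Fin n) (x : Eucl n) :
    partialDeriv i (localizedWeight R χ) x =
      morawetzWeight R x * partialDeriv i χ x - χ x * morawetzWeight R x ^ 3 * x i := by
  unfold localizedWeight
  rw [partialDeriv_mul (hχ.differentiable two_ne_zero x) (differentiable_morawetzWeight hR x),
    partialDeriv_morawetzWeight hR]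
  ring

lemma eulerDeriv_localizedWeight (hR : 0 < R) (hχ : ContDiff ℝ 2 χ) (x : Eucl n) :
    eulerDeriv (localizedWeight R χ) x =
      morawetzWeight R x * eulerDeriv χ x - χ x * morawetzWeight R x ^ 3 * ‖x‖ ^ 2 := by
  simp only [eulerDeriv_eq_sum, partialDeriv_localizedWeight hR hχ, smul_eq_mul,
    EuclideanSpace.real_norm_sq_eq, Finset.mul_sum, ← Finset.sum_sub_distrib]
  exact Finset.sum_congr rfl fun i _ => by ring

lemma sum_partialDeriv_localizedWeight_mul_inner (hR : 0 < R) (hχ : ContDiff ℝ 2 χ)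
    (f : Eucl n → F) (x : Eucl n) :
    ∑ i, partialDeriv i (localizedWeight R χ) x * ⟪partialDeriv i f x, eulerDeriv f x⟫ =
      morawetzWeight R x * ∑ i, partialDeriv i χ x * ⟪partialDeriv i f x, eulerDeriv f x⟫ -
        χ x * morawetzWeight R x ^ 3 * ‖eulerDeriv f x‖ ^ 2 := by
  have hnorm : ‖eulerDeriv f x‖ ^ 2 = ∑ i, x i * ⟪partialDeriv i f x, eulerDeriv f x⟫ := by
    simp only [← real_inner_smul_left, ← sum_inner, ← eulerDeriv_eq_sum, real_inner_self_eq_norm_sq]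
  simp only [partialDeriv_localizedWeight hR hχ, hnorm, Finset.mul_sum, ← Finset.sum_sub_distrib]
  exact Finset.sum_congr rfl fun i _ => by ring

lemma coordLaplacian_localizedWeight (hR : 0 < R) (hχ : ContDiff ℝ 2 χ) (x : Eucl n) :
    coordLaplacian (localizedWeight R χ) x = χ x * coordLaplacian (morawetzWeight R) x -
      2 * morawetzWeight R x ^ 3 * eulerDeriv χ x + coordLaplacian χ x * morawetzWeight R x := by
  unfold localizedWeight
  have hcross : ∑ i, partialDeriv i χ x * partialDeriv i (morawetzWeight R) x =
      -morawetzWeight R x ^ 3 * eulerDeriv χ x := by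
    simp only [partialDeriv_morawetzWeight hR, eulerDeriv_eq_sum, Finset.mul_sum, smul_eq_mul]
    exact Finset.sum_congr rfl fun i _ => by ring
  rw [coordLaplacian_mul hχ (contDiff_morawetzWeight hR), hcross]
  ring

namespace IsSpatialCutoff

lemma abs_eulerDeriv_le (hχ : IsSpatialCutoff K ρ χ) (hK : 0 ≤ K) (hρ : 0 < ρ) (x : Eucl n) :
    |eulerDeriv χ x| ≤ K / ρ * ‖x‖ := by
  refine abs_le_of_sq_le_sq ?_ (by positivity)
  calc eulerDeriv χ x ^ 2 = ‖eulerDeriv χ x‖ ^ 2 := by simp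
    _ ≤ ‖x‖ ^ 2 * gradNormSq χ x := norm_fderiv_apply_sq_le χ x x
    _ ≤ ‖x‖ ^ 2 * (K / ρ) ^ 2 := by gcongr; exact hχ.gradNormSq_le x
    _ = (K / ρ * ‖x‖) ^ 2 := by ring

lemma morawetzWeight_mul_abs_eulerDeriv_le (hχ : IsSpatialCutoff K ρ χ) (hK : 0 ≤ K) (hρ : 0 < ρ)
    (hR : 0 < R) (x : Eucl n) : morawetzWeight R x * |eulerDeriv χ x| ≤ K / ρ := by
  have hw := morawetzWeight_pos hR x
  calc morawetzWeight R x * |eulerDeriv χ x|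
      ≤ morawetzWeight R x * (K / ρ * ‖x‖) := by gcongr; exact hχ.abs_eulerDeriv_le hK hρ x
    _ = K / ρ * (morawetzWeight R x * ‖x‖) := by ring
    _ ≤ K / ρ := mul_le_of_le_one_right (by positivity) (morawetzWeight_mul_norm_le_one hR x)

lemma abs_sum_partialDeriv_mul_inner_le (hχ : IsSpatialCutoff K ρ χ) (hK : 0 ≤ K) (hρ : 0 < ρ)
    (f : Eucl n → F) (x : Eucl n) :
    |∑ i, partialDeriv i χ x * ⟪partialDeriv i f x, eulerDeriv f x⟫| ≤
      K / ρ * ‖x‖ * gradNormSq f x := by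
  have hG := gradNormSq_nonneg f x
  refine abs_le_of_sq_le_sq ?_ (by positivity)
  calc (∑ i, partialDeriv i χ x * ⟪partialDeriv i f x, eulerDeriv f x⟫) ^ 2
      = ⟪∑ i, partialDeriv i χ x • partialDeriv i f x, eulerDeriv f x⟫ ^ 2 := by
        simp only [sum_inner, real_inner_smul_left]
    _ ≤ ‖∑ i, partialDeriv i χ x • partialDeriv i f x‖ ^ 2 * ‖eulerDeriv f x‖ ^ 2 := by
        rw [← mul_pow]
        exact sq_le_sq.2 ((abs_real_inner_le_norm _ _).trans (le_abs_self _))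
    _ ≤ (gradNormSq χ x * gradNormSq f x) * (‖x‖ ^ 2 * gradNormSq f x) := by
        refine mul_le_mul ?_ (norm_fderiv_apply_sq_le f x x) (sq_nonneg _)
          (mul_nonneg (gradNormSq_nonneg χ x) hG)
        simpa only [gradNormSq, Real.norm_eq_abs, sq_abs] using
          norm_sum_smul_sq_le (fun i => partialDeriv i χ x) fun i => partialDeriv i f x
    _ ≤ ((K / ρ) ^ 2 * gradNormSq f x) * (‖x‖ ^ 2 * gradNormSq f x) := by
        gcongr; exact hχ.gradNormSq_le x
    _ = (K / ρ * ‖x‖ * gradNormSq f x) ^ 2 := by ring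

lemma morawetzWeight_mul_abs_sum_le (hχ : IsSpatialCutoff K ρ χ) (hK : 0 ≤ K) (hρ : 0 < ρ)
    (hR : 0 < R) (f : Eucl n → F) (x : Eucl n) :
    morawetzWeight R x * |∑ i, partialDeriv i χ x * ⟪partialDeriv i f x, eulerDeriv f x⟫| ≤
      K / ρ * gradNormSq f x := by
  have hw := morawetzWeight_pos hR x
  have hG := gradNormSq_nonneg f x
  calc morawetzWeight R x * |∑ i, partialDeriv i χ x * ⟪partialDeriv i f x, eulerDeriv f x⟫|
      ≤ morawetzWeight R x * (K / ρ * ‖x‖ * gradNormSq f x) := by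
        gcongr; exact hχ.abs_sum_partialDeriv_mul_inner_le hK hρ f x
    _ = K / ρ * gradNormSq f x * (morawetzWeight R x * ‖x‖) := by ring
    _ ≤ K / ρ * gradNormSq f x :=
        mul_le_of_le_one_right (by positivity) (morawetzWeight_mul_norm_le_one hR x)

lemma coordLaplacian_localizedWeight_le (hχ : IsSpatialCutoff K ρ χ) (hn : 3 ≤ n) (hK : 0 ≤ K)
    (hρ : 0 < ρ) (hR : 0 < R) (x : Eucl n) :
    coordLaplacian (localizedWeight R χ) x ≤ 3 * K / ρ ^ 3 := by
  have hw := morawetzWeight_pos hR x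
  have hmain : χ x * coordLaplacian (morawetzWeight R) x ≤ 0 :=
    mul_nonpos_of_nonneg_of_nonpos (hχ.nonneg x) (coordLaplacian_morawetzWeight_nonpos hn hR x)
  rw [coordLaplacian_localizedWeight hR hχ.contDiff]
  rcases lt_or_ge ‖x‖ ρ with hx | hx
  · have heuler : eulerDeriv χ x = 0 := by simp [eulerDeriv_eq_sum, hχ.partialDeriv_eq_zero hx]
    rw [heuler, hχ.coordLaplacian_eq_zero hx]
    have : 0 ≤ 3 * K / ρ ^ 3 := by positivity
    linarith
  · have hwρ : morawetzWeight R x ≤ ρ⁻¹ := morawetzWeight_le_inv_of_le_norm hρ hx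
    have hgrad : -(morawetzWeight R x ^ 3 * eulerDeriv χ x) ≤ K / ρ ^ 3 :=
      calc -(morawetzWeight R x ^ 3 * eulerDeriv χ x)
          = morawetzWeight R x ^ 2 * (morawetzWeight R x * -eulerDeriv χ x) := by ring
        _ ≤ morawetzWeight R x ^ 2 * (morawetzWeight R x * |eulerDeriv χ x|) := by
            gcongr; exact neg_le_abs _
        _ ≤ ρ⁻¹ ^ 2 * (K / ρ) := by
            gcongr; exact hχ.morawetzWeight_mul_abs_eulerDeriv_le hK hρ hR x
        _ = K / ρ ^ 3 := by field_simp
    have hlap : coordLaplacian χ x * morawetzWeight R x ≤ K / ρ ^ 3 :=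
      calc coordLaplacian χ x * morawetzWeight R x
          ≤ K / ρ ^ 2 * ρ⁻¹ := by
            gcongr; exact (le_abs_self _).trans (hχ.abs_coordLaplacian_le x)
        _ = K / ρ ^ 3 := by field_simp
    linear_combination hmain + 2 * hgrad + hlap

lemma sub_one_div_four_mul_coordLaplacian_le (hχ : IsSpatialCutoff K ρ χ) (hn : 3 ≤ n)
    (hK : 0 ≤ K) (hρ : 0 < ρ) (hR : 0 < R) (x : Eucl n) :
    ((n : ℝ) - 1) / 4 * coordLaplacian (localizedWeight R χ) x ≤ n * K / ρ ^ 3 := by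
  have hn' : (1 : ℝ) ≤ n := by exact_mod_cast le_trans (by norm_num) hn
  calc ((n : ℝ) - 1) / 4 * coordLaplacian (localizedWeight R χ) x
      ≤ ((n : ℝ) - 1) / 4 * (3 * K / ρ ^ 3) := by
        have := sub_nonneg.2 hn'
        gcongr
        exact hχ.coordLaplacian_localizedWeight_le hn hK hρ hR x
    _ = 3 / 4 * (n * K / ρ ^ 3) - 3 / 4 * (K / ρ ^ 3) := by ring
    _ ≤ n * K / ρ ^ 3 := by
        have : 0 ≤ n * K / ρ ^ 3 := by positivity
        have : 0 ≤ K / ρ ^ 3 := by positivity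
        linarith

/-- Away from the region `ρ ≤ |x| ≤ 2ρ` the bulk term is nonnegative, and even controls the energy
density in `|x| ≲ R`. -/
lemma sub_le_morawetzBulk (hχ : IsSpatialCutoff K ρ χ) (hn : 3 ≤ n) (hK : 0 ≤ K)
    (hρ : 0 < ρ) (hR : 0 < R) (f g : Eucl n → F) (x : Eucl n) :
    1 / 2 * (χ x * (R ^ 2 * morawetzWeight R x ^ 3) * (gradNormSq f x + ‖g x‖ ^ 2)) -
        (2 * K / ρ * (gradNormSq f x + ‖g x‖ ^ 2) + n * K / ρ ^ 3 * ‖f x‖ ^ 2) ≤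
      morawetzBulk (localizedWeight R χ) f g x := by
  set w := morawetzWeight R x
  set G := gradNormSq f x
  have hw : 0 < w := morawetzWeight_pos hR x
  have hG : 0 ≤ G := gradNormSq_nonneg f x
  have hradial : χ x * w ^ 3 * ‖eulerDeriv f x‖ ^ 2 ≤ χ x * w ^ 3 * (‖x‖ ^ 2 * G) := by
    have := hχ.nonneg x
    gcongr
    exact norm_fderiv_apply_sq_le f x x
  have hweight : χ x * w * (G + ‖g x‖ ^ 2) =
      χ x * w ^ 3 * (R ^ 2 + ‖x‖ ^ 2) * (G + ‖g x‖ ^ 2) := by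
    linear_combination -(χ x * w * (G + ‖g x‖ ^ 2)) * morawetzWeight_sq_mul hR x
  have hcutGrad : -(K / ρ * G) ≤
      w * ∑ i, partialDeriv i χ x * ⟪partialDeriv i f x, eulerDeriv f x⟫ := by
    have h := hχ.morawetzWeight_mul_abs_sum_le hK hρ hR f x
    exact neg_le_of_abs_le (by rwa [abs_mul, abs_of_pos hw])
  have hcutEuler : -(K / ρ * (G + ‖g x‖ ^ 2)) ≤ w * eulerDeriv χ x * (‖g x‖ ^ 2 - G) := by
    refine neg_le_of_abs_le ?_
    rw [abs_mul, abs_mul, abs_of_pos hw]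
    gcongr
    · exact hχ.morawetzWeight_mul_abs_eulerDeriv_le hK hρ hR x
    · exact abs_le.2 ⟨by linarith [sq_nonneg ‖g x‖], by linarith⟩
  have hzeroOrder : ((n : ℝ) - 1) / 4 * coordLaplacian (localizedWeight R χ) x * ‖f x‖ ^ 2 ≤
      n * K / ρ ^ 3 * ‖f x‖ ^ 2 := by
    gcongr
    exact hχ.sub_one_div_four_mul_coordLaplacian_le hn hK hρ hR x
  rw [morawetzBulk, sum_partialDeriv_localizedWeight_mul_inner hR hχ.contDiff,
    eulerDeriv_localizedWeight hR hχ.contDiff, localizedWeight]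
  have hKG : 0 ≤ K / ρ * G := by positivity
  have hKg : 0 ≤ K / ρ * ‖g x‖ ^ 2 := by positivity
  linear_combination hradial - hweight / 2 + hcutGrad + hcutEuler / 2 + hzeroOrder + hKG / 2 +
    3 / 2 * hKg

end IsSpatialCutoff

end LocalizedWeight

section LocalizedMorawetz

variable {n : ℕ} {F : Type*} [NormedAddCommGroup F] [InnerProductSpace ℝ F]
  {K R ρ E m : ℝ} {k χ : Eucl n → ℝ} {f g : Eucl n → F} {u : ℝ → Eucl n → F}

/-- The density `⟪∂ₜu, Nu⟫` of the momentum attached to the Morawetz multiplier `N` with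
weight `k`. -/
def morawetzMomentum (k : Eucl n → ℝ) (u : ℝ → Eucl n → F) (t : ℝ) (x : Eucl n) : ℝ :=
  ⟪timePartial u t x, morawetzMultiplier k (u t) x⟫

lemma contDiff_uncurry_morawetzMomentum (hk : ContDiff ℝ 1 k) (hu : ContDiff ℝ 2 (uncurry u)) :
    ContDiff ℝ 1 (uncurry (morawetzMomentum k u)) :=
  (contDiff_timePartial hu).inner ℝ ((hk.comp contDiff_snd).smul
    ((contDiff_fderiv_slice_apply hu contDiff_id).add
      (contDiff_const.smul (hu.of_le one_le_two))))

lemma IsClassicalWave.timePartial_morawetzMomentum (hu : IsClassicalWave u) (t : ℝ) (x : Eucl n) :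
    timePartial (morawetzMomentum k u) t x =
      ⟪coordLaplacian (u t) x, morawetzMultiplier k (u t) x⟫ +
        ⟪timePartial u t x, morawetzMultiplier k (timePartial u t) x⟫ := by
  have hmult : HasDerivAt (fun s => morawetzMultiplier k (u s) x)
      (morawetzMultiplier k (timePartial u t) x) t :=
    ((hasDerivAt_fderiv_slice_apply hu.contDiff t x x).add
      ((WaveEquation.hasDerivAt_timePartial (hu.contDiff.of_le one_le_two) t x).const_smul
        _)).const_smul (k x)
  exact ((hu.hasDerivAt_timePartial t x).inner ℝ hmult).deriv.trans (add_comm _ _)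

lemma IsClassicalWave.timePartial_morawetzMomentum_add_morawetzBulk (hu : IsClassicalWave u)
    (hk : ContDiff ℝ 2 k) (t : ℝ) (x : Eucl n) :
    timePartial (morawetzMomentum k u) t x + morawetzBulk k (u t) (timePartial u t) x =
      coordDiv (morawetzFlux k (u t) (timePartial u t)) x := by
  rw [hu.timePartial_morawetzMomentum, coordDiv_morawetzFlux hk (contDiff_slice hu.contDiff t)
    (contDiff_slice (contDiff_timePartial hu.contDiff) t)]

namespace IsSpatialCutoff

lemma eq_zero_of_notMem_closedBall (hχ : IsSpatialCutoff K ρ χ) {x : Eucl n}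
    (hx : x ∉ Metric.closedBall 0 (2 * ρ)) : χ x = 0 :=
  hχ.eq_zero x (not_le.1 (mt mem_closedBall_zero_iff.2 hx)).le

lemma localizedWeight_eq_zero (hχ : IsSpatialCutoff K ρ χ) {x : Eucl n}
    (hx : x ∉ Metric.closedBall 0 (2 * ρ)) : localizedWeight R χ x = 0 := by
  rw [localizedWeight, hχ.eq_zero_of_notMem_closedBall hx, zero_mul]

lemma morawetzFlux_eq_zero (hχ : IsSpatialCutoff K ρ χ) (f g : Eucl n → F) (i : Fin n) {x : Eucl n}
    (hx : x ∉ Metric.closedBall 0 (2 * ρ)) : morawetzFlux (localizedWeight R χ) f g i x = 0 := by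
  have hloc : localizedWeight R χ =ᶠ[𝓝 x] fun _ => 0 :=
    Filter.mem_of_superset (Metric.isClosed_closedBall.isOpen_compl.mem_nhds hx)
      fun y hy => hχ.localizedWeight_eq_zero hy
  simp [morawetzFlux, morawetzMultiplier, hloc.eq_of_nhds, partialDeriv, hloc.fderiv_eq]

lemma abs_inner_morawetzMultiplier_le (hχ : IsSpatialCutoff K ρ χ) (hR : 0 < R)
    (f g : Eucl n → F) (x : Eucl n) :
    |⟪g x, morawetzMultiplier (localizedWeight R χ) f x⟫| ≤
      gradNormSq f x + ‖g x‖ ^ 2 +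
        ((n : ℝ) ^ 2 + 1) / 4 * (morawetzWeight R x ^ 2 * ‖χ x • f x‖ ^ 2) := by
  set w := morawetzWeight R x
  set e := eulerDeriv f x
  have hw : 0 < w := morawetzWeight_pos hR x
  have : 0 ≤ (n : ℝ) := n.cast_nonneg
  have hamgm (p q : F) : |⟪p, q⟫| ≤ (‖p‖ ^ 2 + ‖q‖ ^ 2) / 2 := by
    nlinarith [abs_real_inner_le_norm p q, sq_nonneg (‖p‖ - ‖q‖)]
  have hsplit : ⟪g x, morawetzMultiplier (localizedWeight R χ) f x⟫ =
      ⟪g x, (χ x * w) • e⟫ + ⟪g x, (((n : ℝ) - 1) / 2 * w) • χ x • f x⟫ := by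
    rw [← inner_add_right, morawetzMultiplier, localizedWeight]
    congr 1
    module
  have hradial : ‖(χ x * w) • e‖ ^ 2 ≤ gradNormSq f x :=
    calc ‖(χ x * w) • e‖ ^ 2 = χ x ^ 2 * (w ^ 2 * ‖e‖ ^ 2) := by
          rw [norm_smul, mul_pow, Real.norm_eq_abs, sq_abs]; ring
      _ ≤ w ^ 2 * ‖e‖ ^ 2 := mul_le_of_le_one_left (by positivity)
          (pow_le_one₀ (hχ.nonneg x) (hχ.le_one x))
      _ ≤ gradNormSq f x := morawetzWeight_sq_mul_norm_eulerDeriv_sq_le hR f x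
  have hzeroOrder : ‖(((n : ℝ) - 1) / 2 * w) • χ x • f x‖ ^ 2 ≤
      ((n : ℝ) ^ 2 + 1) / 4 * (w ^ 2 * ‖χ x • f x‖ ^ 2) := by
    rw [norm_smul _ (χ x • f x), mul_pow, Real.norm_eq_abs, sq_abs, mul_pow, mul_assoc]
    gcongr
    nlinarith
  rw [hsplit]
  calc |⟪g x, (χ x * w) • e⟫ + ⟪g x, (((n : ℝ) - 1) / 2 * w) • χ x • f x⟫|
      ≤ (‖g x‖ ^ 2 + ‖(χ x * w) • e‖ ^ 2) / 2 +
          (‖g x‖ ^ 2 + ‖(((n : ℝ) - 1) / 2 * w) • χ x • f x‖ ^ 2) / 2 :=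
        (abs_add_le _ _).trans (add_le_add (hamgm _ _) (hamgm _ _))
    _ ≤ gradNormSq f x + ‖g x‖ ^ 2 + ((n : ℝ) ^ 2 + 1) / 4 * (w ^ 2 * ‖χ x • f x‖ ^ 2) := by
        have : 0 ≤ ((n : ℝ) ^ 2 + 1) / 4 * (w ^ 2 * ‖χ x • f x‖ ^ 2) := by positivity
        linarith [gradNormSq_nonneg f x]

lemma setIntegral_morawetzWeight_sq_mul_smul_le (hχ : IsSpatialCutoff K ρ χ) (hn : 3 ≤ n)
    (hρ : 0 < ρ) (hR : 0 < R) (hf : ContDiff ℝ 1 f)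
    (hE : ∫ x in Metric.closedBall 0 (2 * ρ), gradNormSq f x ≤ E)
    (hm : ∫ x in Metric.closedBall 0 (2 * ρ), ‖f x‖ ^ 2 ≤ m * ρ ^ 2) :
    ∫ x in Metric.closedBall 0 (2 * ρ), morawetzWeight R x ^ 2 * ‖χ x • f x‖ ^ 2 ≤
      8 * (E + K ^ 2 * m) := by
  set B : Set (Eucl n) := Metric.closedBall 0 (2 * ρ)
  have hB : IsCompact B := isCompact_closedBall 0 (2 * ρ)
  have hχf : ContDiff ℝ 1 fun x => χ x • f x := (hχ.contDiff.of_le one_le_two).smul hf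
  have hG : IntegrableOn (gradNormSq f) B :=
    (contDiff_gradNormSq (m := 0) hf).continuous.continuousOn.integrableOn_compact hB
  have hmass : IntegrableOn (fun x => ‖f x‖ ^ 2) B :=
    (hf.continuous.norm.pow 2).continuousOn.integrableOn_compact hB
  have hpointwise (x : Eucl n) : gradNormSq (fun y => χ y • f y) x ≤
      2 * (gradNormSq f x + (K / ρ) ^ 2 * ‖f x‖ ^ 2) := by
    refine (gradNormSq_smul_le (hχ.contDiff.differentiable two_ne_zero x)
      (hf.differentiable one_ne_zero x)).trans ?_
    gcongr
    · exact mul_le_of_le_one_left (gradNormSq_nonneg f x)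
        (pow_le_one₀ (hχ.nonneg x) (hχ.le_one x))
    · exact hχ.gradNormSq_le x
  calc ∫ x in B, morawetzWeight R x ^ 2 * ‖χ x • f x‖ ^ 2
      ≤ 4 * ∫ x in B, gradNormSq (fun y => χ y • f y) x :=
        setIntegral_morawetzWeight_sq_mul_le hn hR hχf hB
          fun x hx => by simp [hχ.eq_zero_of_notMem_closedBall hx]
    _ ≤ 4 * ∫ x in B, 2 * (gradNormSq f x + (K / ρ) ^ 2 * ‖f x‖ ^ 2) := by
        gcongr ?_ * ?_
        exact setIntegral_mono ((contDiff_gradNormSq (m := 0)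
          hχf).continuous.continuousOn.integrableOn_compact hB)
          ((hG.add (hmass.const_mul _)).const_mul 2) hpointwise
    _ = 8 * ((∫ x in B, gradNormSq f x) + (K / ρ) ^ 2 * ∫ x in B, ‖f x‖ ^ 2) := by
        rw [integral_const_mul, integral_add hG (hmass.const_mul _), integral_const_mul]
        ring
    _ ≤ 8 * (E + (K / ρ) ^ 2 * (m * ρ ^ 2)) := by gcongr
    _ = 8 * (E + K ^ 2 * m) := by field_simp

lemma abs_setIntegral_inner_morawetzMultiplier_le (hχ : IsSpatialCutoff K ρ χ) (hn : 3 ≤ n)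
    (hρ : 0 < ρ) (hR : 0 < R) (hf : ContDiff ℝ 1 f) (hg : Continuous g)
    (hE : ∫ x in Metric.closedBall 0 (2 * ρ), (gradNormSq f x + ‖g x‖ ^ 2) ≤ E)
    (hm : ∫ x in Metric.closedBall 0 (2 * ρ), ‖f x‖ ^ 2 ≤ m * ρ ^ 2) :
    |∫ x in Metric.closedBall 0 (2 * ρ), ⟪g x, morawetzMultiplier (localizedWeight R χ) f x⟫| ≤
      E + 2 * (n ^ 2 + 1) * (E + K ^ 2 * m) := by
  set B : Set (Eucl n) := Metric.closedBall 0 (2 * ρ)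
  have hB : IsCompact B := isCompact_closedBall 0 (2 * ρ)
  have hG : Continuous (gradNormSq f) := (contDiff_gradNormSq (m := 0) hf).continuous
  have hen : IntegrableOn (fun x => gradNormSq f x + ‖g x‖ ^ 2) B :=
    (hG.add (hg.norm.pow 2)).continuousOn.integrableOn_compact hB
  have hw : Continuous (morawetzWeight (n := n) R) :=
    (contDiff_morawetzWeight hR (m := 0)).continuous
  have hhardy : IntegrableOn (fun x => morawetzWeight R x ^ 2 * ‖χ x • f x‖ ^ 2) B :=
    ((hw.pow 2).mul ((hχ.contDiff.continuous.smul hf.continuous).norm.pow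
      2)).continuousOn.integrableOn_compact hB
  have hGE : ∫ x in B, gradNormSq f x ≤ E :=
    (setIntegral_mono (hG.continuousOn.integrableOn_compact hB) hen
      fun x => le_add_of_nonneg_right (sq_nonneg _)).trans hE
  have hbound : IntegrableOn (fun x => gradNormSq f x + ‖g x‖ ^ 2 +
      ((n : ℝ) ^ 2 + 1) / 4 * (morawetzWeight R x ^ 2 * ‖χ x • f x‖ ^ 2)) B :=
    hen.add (hhardy.const_mul _)
  rw [← Real.norm_eq_abs]
  calc ‖∫ x in B, ⟪g x, morawetzMultiplier (localizedWeight R χ) f x⟫‖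
      ≤ ∫ x in B, (gradNormSq f x + ‖g x‖ ^ 2 +
          ((n : ℝ) ^ 2 + 1) / 4 * (morawetzWeight R x ^ 2 * ‖χ x • f x‖ ^ 2)) :=
        norm_integral_le_of_norm_le hbound
          (.of_forall fun x => hχ.abs_inner_morawetzMultiplier_le hR f g x)
    _ = (∫ x in B, (gradNormSq f x + ‖g x‖ ^ 2)) +
          ((n : ℝ) ^ 2 + 1) / 4 * ∫ x in B, morawetzWeight R x ^ 2 * ‖χ x • f x‖ ^ 2 := by
        rw [integral_add hen (hhardy.const_mul _), integral_const_mul]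
    _ ≤ E + ((n : ℝ) ^ 2 + 1) / 4 * (8 * (E + K ^ 2 * m)) := by
        gcongr
        exact hχ.setIntegral_morawetzWeight_sq_mul_smul_le hn hρ hR hf hGE hm
    _ = E + 2 * (n ^ 2 + 1) * (E + K ^ 2 * m) := by ring

lemma setIntegral_timePartial_morawetzMomentum_add_le (hχ : IsSpatialCutoff K ρ χ) (hn : 3 ≤ n)
    (hK : 0 ≤ K) (hρ : 0 < ρ) (hR : 0 < R) (hu : IsClassicalWave u) (t : ℝ) :
    ∫ x in Metric.closedBall 0 (2 * ρ),
      (timePartial (morawetzMomentum (localizedWeight R χ) u) t x +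
        (1 / 2 * (χ x * (R ^ 2 * morawetzWeight R x ^ 3) * energyDensity u t x) -
          (2 * K / ρ * energyDensity u t x + n * K / ρ ^ 3 * ‖u t x‖ ^ 2))) ≤ 0 := by
  have hk : ContDiff ℝ 2 (localizedWeight R χ) := contDiff_localizedWeight hR hχ.contDiff
  refine setIntegral_nonpos_of_le_coordDiv (isCompact_closedBall 0 (2 * ρ)) ?_
    (fun i => contDiff_morawetzFlux hk (contDiff_slice hu.contDiff t)
      (contDiff_slice (contDiff_timePartial hu.contDiff) t) i)
    (fun i x hx => hχ.morawetzFlux_eq_zero _ _ i hx) fun x => ?_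
  · have hQ : Continuous (timePartial (morawetzMomentum (localizedWeight R χ) u) t) :=
      (contDiff_timePartial (m := 0) (contDiff_uncurry_morawetzMomentum (hk.of_le one_le_two)
        hu.contDiff)).continuous.uncurry_left t
    have he : Continuous (energyDensity u t) :=
      (contDiff_uncurry_energyDensity hu.contDiff).continuous.uncurry_left t
    have hut : Continuous (u t) := hu.contDiff.continuous.uncurry_left t
    have hw : Continuous (morawetzWeight (n := n) R) :=
      (contDiff_morawetzWeight hR (m := 0)).continuous
    have := hχ.contDiff.continuous
    fun_prop
  · rw [← hu.timePartial_morawetzMomentum_add_morawetzBulk hk]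
    exact add_le_add_right (hχ.sub_le_morawetzBulk hn hK hρ hR (u t) (timePartial u t) x) _

lemma continuous_uncurry_mul_energyDensity (hχ : IsSpatialCutoff K ρ χ) (hR : 0 < R)
    (hu : ContDiff ℝ 2 (uncurry u)) : Continuous (uncurry fun t x =>
      χ x * (R ^ 2 * morawetzWeight R x ^ 3) * energyDensity u t x) :=
  ((hχ.contDiff.continuous.comp continuous_snd).mul (continuous_const.mul
    (((contDiff_morawetzWeight hR (m := 0)).continuous.comp continuous_snd).pow 3))).mul
      (contDiff_uncurry_energyDensity hu).continuous

lemma setIntegral_morawetz_le (hχ : IsSpatialCutoff K ρ χ) (hn : 3 ≤ n) (hK : 0 ≤ K) (hρ : 0 < ρ)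
    (hR : 0 < R) (hu : IsClassicalWave u) {t : ℝ}
    (hE : ∫ x in Metric.closedBall 0 (2 * ρ), energyDensity u t x ≤ E)
    (hm : ∫ x in Metric.closedBall 0 (2 * ρ), ‖u t x‖ ^ 2 ≤ m * ρ ^ 2) :
    1 / 2 * (∫ x in Metric.closedBall 0 (2 * ρ),
          χ x * (R ^ 2 * morawetzWeight R x ^ 3) * energyDensity u t x) +
        ∫ x in Metric.closedBall 0 (2 * ρ),
          timePartial (morawetzMomentum (localizedWeight R χ) u) t x ≤
      (2 * K * E + n * K * m) / ρ := by
  set B : Set (Eucl n) := Metric.closedBall 0 (2 * ρ)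
  have hB : IsCompact B := isCompact_closedBall 0 (2 * ρ)
  have hQ : IntegrableOn (timePartial (morawetzMomentum (localizedWeight R χ) u) t) B :=
    integrableOn_slice (contDiff_timePartial (m := 0) (contDiff_uncurry_morawetzMomentum
      ((contDiff_localizedWeight hR hχ.contDiff).of_le one_le_two) hu.contDiff)).continuous hB t
  have hA : IntegrableOn
      (fun x => χ x * (R ^ 2 * morawetzWeight R x ^ 3) * energyDensity u t x) B :=
    integrableOn_slice (hχ.continuous_uncurry_mul_energyDensity hR hu.contDiff) hB t
  have he : IntegrableOn (energyDensity u t) B :=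
    integrableOn_slice (contDiff_uncurry_energyDensity hu.contDiff).continuous hB t
  have hmass : IntegrableOn (fun x => ‖u t x‖ ^ 2) B :=
    ((hu.contDiff.continuous.uncurry_left t).norm.pow 2).continuousOn.integrableOn_compact hB
  have herr : IntegrableOn
      (fun x => 2 * K / ρ * energyDensity u t x + n * K / ρ ^ 3 * ‖u t x‖ ^ 2) B :=
    (he.const_mul _).add (hmass.const_mul _)
  have hdiff : IntegrableOn
      (fun x => 1 / 2 * (χ x * (R ^ 2 * morawetzWeight R x ^ 3) * energyDensity u t x) -
        (2 * K / ρ * energyDensity u t x + n * K / ρ ^ 3 * ‖u t x‖ ^ 2)) B :=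
    (hA.const_mul _).sub herr
  have hbulk := hχ.setIntegral_timePartial_morawetzMomentum_add_le hn hK hρ hR hu t
  rw [integral_add hQ hdiff, integral_sub (hA.const_mul _) herr,
    integral_add (he.const_mul _) (hmass.const_mul _), integral_const_mul, integral_const_mul,
    integral_const_mul] at hbulk
  have herror : 2 * K / ρ * (∫ x in B, energyDensity u t x) +
      n * K / ρ ^ 3 * ∫ x in B, ‖u t x‖ ^ 2 ≤ 2 * K / ρ * E + n * K / ρ ^ 3 * (m * ρ ^ 2) := by
    gcongr
  have hscale : 2 * K / ρ * E + n * K / ρ ^ 3 * (m * ρ ^ 2) = (2 * K * E + n * K * m) / ρ := by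
    field_simp
  linarith

theorem intervalIntegral_setIntegral_mul_energyDensity_le (hχ : IsSpatialCutoff K ρ χ)
    (hn : 3 ≤ n) (hK : 0 ≤ K) (hρ : 0 < ρ) (hR : 0 < R) (hu : IsClassicalWave u)
    (hE : ∀ t ∈ Icc 0 ρ, ∫ x in Metric.closedBall 0 (2 * ρ), energyDensity u t x ≤ E)
    (hm : ∀ t ∈ Icc 0 ρ, ∫ x in Metric.closedBall 0 (2 * ρ), ‖u t x‖ ^ 2 ≤ m * ρ ^ 2) :
    ∫ t in 0..ρ, ∫ x in Metric.closedBall 0 (2 * ρ),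
        χ x * (R ^ 2 * morawetzWeight R x ^ 3) * energyDensity u t x ≤
      4 * (E + 2 * (n ^ 2 + 1) * (E + K ^ 2 * m)) + 2 * (2 * K * E + n * K * m) := by
  set B : Set (Eucl n) := Metric.closedBall 0 (2 * ρ)
  have hB : IsCompact B := isCompact_closedBall 0 (2 * ρ)
  set Q := morawetzMomentum (localizedWeight R χ) u
  have hQ : ContDiff ℝ 1 (uncurry Q) := contDiff_uncurry_morawetzMomentum
    ((contDiff_localizedWeight hR hχ.contDiff).of_le one_le_two) hu.contDiff
  have hQ' : Continuous fun t => ∫ x in B, timePartial Q t x :=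
    continuous_setIntegral_slice (contDiff_timePartial (m := 0) hQ).continuous hB
  have hA : Continuous fun t => ∫ x in B,
      χ x * (R ^ 2 * morawetzWeight R x ^ 3) * energyDensity u t x :=
    continuous_setIntegral_slice (hχ.continuous_uncurry_mul_energyDensity hR hu.contDiff) hB
  have hboundary {t : ℝ} (ht : t ∈ Icc 0 ρ) : |∫ x in B, Q t x| ≤
      E + 2 * (n ^ 2 + 1) * (E + K ^ 2 * m) :=
    hχ.abs_setIntegral_inner_morawetzMultiplier_le hn hρ hR
      ((contDiff_slice hu.contDiff t).of_le one_le_two)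
      ((contDiff_timePartial (m := 1) hu.contDiff).continuous.uncurry_left t) (hE t ht) (hm t ht)
  have hint : ∫ t in 0..ρ, (1 / 2 * (∫ x in B,
        χ x * (R ^ 2 * morawetzWeight R x ^ 3) * energyDensity u t x) +
          ∫ x in B, timePartial Q t x) ≤ ∫ _ in 0..ρ, (2 * K * E + n * K * m) / ρ :=
    intervalIntegral.integral_mono_on hρ.le
      (((hA.const_mul _).add hQ').intervalIntegrable _ _) intervalIntegrable_const
      fun t ht => hχ.setIntegral_morawetz_le hn hK hρ hR hu (hE t ht) (hm t ht)
  rw [intervalIntegral.integral_add ((hA.const_mul _).intervalIntegrable _ _)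
      (hQ'.intervalIntegrable _ _), intervalIntegral.integral_const_mul,
    intervalIntegral_setIntegral_timePartial hQ hB, intervalIntegral.integral_const, sub_zero,
    smul_eq_mul, mul_div_cancel₀ _ hρ.ne'] at hint
  linarith [neg_le_of_abs_le (hboundary ⟨hρ.le, le_rfl⟩), le_of_abs_le (hboundary ⟨le_rfl, hρ.le⟩)]

end IsSpatialCutoff

end LocalizedMorawetz

section Poincare

lemma setLIntegral_closedBall_enorm_sub_sq_le {E F : Type*} [NormedAddCommGroup E]
    [MeasurableSpace E] [BorelSpace E] {μ : Measure E} [μ.IsAddLeftInvariant]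
    [NormedAddCommGroup F] (f : E → F) {r : ℝ} {y : E}
    (hy : y ∈ Metric.closedBall 0 r) :
    ∫⁻ x in Metric.closedBall 0 r, ‖f x - f y‖ₑ ^ 2 ∂μ ≤
      ∫⁻ h in Metric.closedBall 0 (2 * r), ‖f (y + h) - f y‖ₑ ^ 2 ∂μ := by
  rw [← lintegral_indicator measurableSet_closedBall,
    ← lintegral_indicator measurableSet_closedBall, ← lintegral_add_left_eq_self _ y]
  refine lintegral_mono fun h => ?_
  by_cases hyh : y + h ∈ Metric.closedBall 0 r
  · have hh : h ∈ Metric.closedBall 0 (2 * r) := by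
      rw [mem_closedBall_zero_iff] at *
      calc ‖h‖ = ‖(y + h) - y‖ := by rw [add_sub_cancel_left]
        _ ≤ ‖y + h‖ + ‖y‖ := norm_sub_le _ _
        _ ≤ 2 * r := by linarith
    rw [indicator_of_mem hyh, indicator_of_mem hh]
  · rw [indicator_of_notMem hyh]
    exact zero_le

lemma sq_lintegral_le_measure_univ_mul {α : Type*} [MeasurableSpace α] {μ : Measure α}
    {g : α → ℝ≥0∞} (hg : AEMeasurable g μ) :
    (∫⁻ a, g a ∂μ) ^ 2 ≤ μ univ * ∫⁻ a, g a ^ 2 ∂μ := by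
  have h := ENNReal.lintegral_mul_le_Lp_mul_Lq μ .two_two (aemeasurable_const (b := 1)) hg
  simp only [Pi.mul_apply, one_mul, lintegral_const, ENNReal.rpow_two] at h
  refine (pow_le_pow_left' h 2).trans_eq ?_
  rw [mul_pow, ← ENNReal.rpow_mul_natCast, ← ENNReal.rpow_mul_natCast]
  norm_num

variable {E F : Type*} [NormedAddCommGroup E] [NormedSpace ℝ E] [NormedAddCommGroup F]
  [NormedSpace ℝ F] {f : E → F}

lemma enorm_sub_sq_le_mul_lintegral_deriv_sq {f : ℝ → F} (hf : ContDiff ℝ 1 f) {a b : ℝ}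
    (hab : a ≤ b) :
    ‖f b - f a‖ₑ ^ 2 ≤ ENNReal.ofReal (b - a) * ∫⁻ s in Icc a b, ‖deriv f s‖ₑ ^ 2 := by
  have h := sq_lintegral_le_measure_univ_mul (μ := volume.restrict (Icc a b))
    (hf.continuous_deriv le_rfl).enorm.measurable.aemeasurable
  rw [Measure.restrict_apply_univ, Real.volume_Icc] at h
  exact (pow_le_pow_left' (enorm_sub_le_lintegral_deriv_of_contDiffOn_Icc hf.contDiffOn hab)
    2).trans h

lemma enorm_add_sub_sq_le (hf : ContDiff ℝ 1 f) (h y : E) :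
    ‖f (y + h) - f y‖ₑ ^ 2 ≤ ∫⁻ s in Icc (0 : ℝ) 1, ‖h‖ₑ ^ 2 * ‖fderiv ℝ f (y + s • h)‖ₑ ^ 2 := by
  have hderiv (s : ℝ) : HasDerivAt (fun s : ℝ => f (y + s • h)) (fderiv ℝ f (y + s • h) h) s :=
    (hf.differentiable one_ne_zero _).hasFDerivAt.comp_hasDerivAt s
      (by simpa using ((hasDerivAt_id s).smul_const h).const_add y)
  have hline : ContDiff ℝ 1 fun s : ℝ => f (y + s • h) := by fun_prop
  calc ‖f (y + h) - f y‖ₑ ^ 2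
      ≤ ∫⁻ s in Icc (0 : ℝ) 1, ‖fderiv ℝ f (y + s • h) h‖ₑ ^ 2 := by
        simpa [(hderiv _).deriv] using enorm_sub_sq_le_mul_lintegral_deriv_sq hline zero_le_one
    _ ≤ ∫⁻ s in Icc (0 : ℝ) 1, ‖h‖ₑ ^ 2 * ‖fderiv ℝ f (y + s • h)‖ₑ ^ 2 := by
        gcongr with s
        rw [← mul_pow, mul_comm ‖h‖ₑ]
        gcongr
        exact ContinuousLinearMap.le_opENorm _ _

variable [FiniteDimensional ℝ E] [MeasurableSpace E] [BorelSpace E] {μ : Measure E}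
  [μ.IsAddHaarMeasure]

lemma lintegral_enorm_add_sub_sq_le (hf : ContDiff ℝ 1 f) (h : E) :
    ∫⁻ y, ‖f (y + h) - f y‖ₑ ^ 2 ∂μ ≤ ‖h‖ₑ ^ 2 * ∫⁻ y, ‖fderiv ℝ f y‖ₑ ^ 2 ∂μ := by
  have : Continuous (fderiv ℝ f) := hf.continuous_fderiv one_ne_zero
  calc ∫⁻ y, ‖f (y + h) - f y‖ₑ ^ 2 ∂μ
      ≤ ∫⁻ y, (∫⁻ s in Icc (0 : ℝ) 1, ‖h‖ₑ ^ 2 * ‖fderiv ℝ f (y + s • h)‖ₑ ^ 2) ∂μ :=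
        lintegral_mono (enorm_add_sub_sq_le hf h)
    _ = ∫⁻ s in Icc (0 : ℝ) 1, ∫⁻ y, ‖h‖ₑ ^ 2 * ‖fderiv ℝ f (y + s • h)‖ₑ ^ 2 ∂μ := by
        refine lintegral_lintegral_swap (Measurable.aemeasurable ?_)
        have : Continuous fun p : E × ℝ => fderiv ℝ f (p.1 + p.2 • h) := by fun_prop
        exact (this.enorm.measurable.pow_const 2).const_mul _
    _ = ∫⁻ _ in Icc (0 : ℝ) 1, ‖h‖ₑ ^ 2 * ∫⁻ y, ‖fderiv ℝ f y‖ₑ ^ 2 ∂μ := by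
        refine lintegral_congr fun s => ?_
        rw [lintegral_const_mul' _ _ (by simp),
          lintegral_add_right_eq_self (fun y => ‖fderiv ℝ f y‖ₑ ^ 2)]
    _ = ‖h‖ₑ ^ 2 * ∫⁻ y, ‖fderiv ℝ f y‖ₑ ^ 2 ∂μ := by simp

lemma lintegral_setLIntegral_closedBall_enorm_add_sub_sq_le (hf : ContDiff ℝ 1 f) {r : ℝ} :
    ∫⁻ y, (∫⁻ h in Metric.closedBall 0 r, ‖f (y + h) - f y‖ₑ ^ 2 ∂μ) ∂μ ≤
      ENNReal.ofReal r ^ 2 * (∫⁻ y, ‖fderiv ℝ f y‖ₑ ^ 2 ∂μ) * μ (Metric.closedBall 0 r) := by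
  have hcont : Continuous fun p : E × E => f (p.1 + p.2) - f p.1 := by fun_prop
  rw [lintegral_lintegral_swap (hcont.enorm.measurable.pow_const 2).aemeasurable]
  calc ∫⁻ h in Metric.closedBall 0 r, (∫⁻ y, ‖f (y + h) - f y‖ₑ ^ 2 ∂μ) ∂μ
      ≤ ∫⁻ _ in Metric.closedBall (0 : E) r,
          ENNReal.ofReal r ^ 2 * (∫⁻ y, ‖fderiv ℝ f y‖ₑ ^ 2 ∂μ) ∂μ := by
        refine setLIntegral_mono' measurableSet_closedBall fun h hh =>
          (lintegral_enorm_add_sub_sq_le hf h).trans ?_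
        gcongr
        exact (ofReal_norm h).symm.trans_le
          (ENNReal.ofReal_le_ofReal (mem_closedBall_zero_iff.1 hh))
    _ = _ := setLIntegral_const _ _

theorem exists_setLIntegral_closedBall_enorm_sub_sq_le (μ : Measure E) [μ.IsAddHaarMeasure]
    (hf : ContDiff ℝ 1 f) {r : ℝ} (hr : 0 < r) :
    ∃ c : F, ∫⁻ x in Metric.closedBall 0 r, ‖f x - c‖ₑ ^ 2 ∂μ ≤
      ENNReal.ofReal (2 ^ Module.finrank ℝ E * (2 * r) ^ 2) * ∫⁻ x, ‖fderiv ℝ f x‖ₑ ^ 2 ∂μ := by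
  have hcont : Continuous fun p : E × E => f p.2 - f p.1 := by fun_prop
  obtain ⟨y, -, hy⟩ := exists_le_setLAverage (μ := μ) (s := Metric.closedBall 0 r)
    (f := fun y => ∫⁻ x in Metric.closedBall 0 r, ‖f x - f y‖ₑ ^ 2 ∂μ)
    (Metric.measure_closedBall_pos μ 0 hr).ne' measure_closedBall_lt_top.ne
    (hcont.enorm.measurable.pow_const 2).lintegral_prod_right'.aemeasurable
  have hdouble : μ (Metric.closedBall 0 (2 * r)) =
      ENNReal.ofReal (2 ^ Module.finrank ℝ E) * μ (Metric.closedBall 0 r) := by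
    rw [Measure.addHaar_closedBall_mul μ (0 : E) zero_le_two hr.le]
  refine ⟨f y, hy.trans ?_⟩
  rw [setLAverage_eq]
  refine ENNReal.div_le_of_le_mul ?_
  calc ∫⁻ y in Metric.closedBall 0 r, (∫⁻ x in Metric.closedBall 0 r, ‖f x - f y‖ₑ ^ 2 ∂μ) ∂μ
      ≤ ∫⁻ y in Metric.closedBall 0 r,
          (∫⁻ h in Metric.closedBall 0 (2 * r), ‖f (y + h) - f y‖ₑ ^ 2 ∂μ) ∂μ :=
        setLIntegral_mono' measurableSet_closedBall fun y hy =>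
          setLIntegral_closedBall_enorm_sub_sq_le f hy
    _ ≤ ∫⁻ y, (∫⁻ h in Metric.closedBall 0 (2 * r), ‖f (y + h) - f y‖ₑ ^ 2 ∂μ) ∂μ :=
        setLIntegral_le_lintegral _ _
    _ ≤ ENNReal.ofReal (2 * r) ^ 2 * (∫⁻ y, ‖fderiv ℝ f y‖ₑ ^ 2 ∂μ) *
          μ (Metric.closedBall 0 (2 * r)) :=
        lintegral_setLIntegral_closedBall_enorm_add_sub_sq_le hf
    _ = _ := by
        rw [hdouble, ENNReal.ofReal_mul (p := 2 ^ _) (by positivity),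
          ENNReal.ofReal_pow (p := 2 * r) (by positivity)]
        ring

end Poincare

section Mass

lemma enorm_add_sq_le {F : Type*} [TopologicalSpace F] [ESeminormedAddMonoid F] (a b : F) :
    ‖a + b‖ₑ ^ 2 ≤ 2 * ‖a‖ₑ ^ 2 + 2 * ‖b‖ₑ ^ 2 :=
  calc ‖a + b‖ₑ ^ 2 ≤ (‖a‖ₑ + ‖b‖ₑ) ^ 2 := pow_le_pow_left' (enorm_add_le a b) 2
    _ ≤ 2 * ‖a‖ₑ ^ 2 + 2 * ‖b‖ₑ ^ 2 := by
      have h := ENNReal.rpow_add_le_mul_rpow_add_rpow ‖a‖ₑ ‖b‖ₑ (one_le_two (α := ℝ))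
      simpa [show (2 : ℝ) - 1 = 1 by norm_num, mul_add] using h

variable {n : ℕ} {F : Type*} [NormedAddCommGroup F]

section NormedSpace

variable [NormedSpace ℝ F]

lemma enorm_fderiv_sq_le_ofReal_gradNormSq (f : Eucl n → F) (x : Eucl n) :
    ‖fderiv ℝ f x‖ₑ ^ 2 ≤ ENNReal.ofReal (gradNormSq f x) := by
  have h : ‖fderiv ℝ f x‖ ≤ √(gradNormSq f x) :=
    ContinuousLinearMap.opNorm_le_bound _ (Real.sqrt_nonneg _) fun v => by
      refine (Real.le_sqrt_of_sq_le (norm_fderiv_apply_sq_le f x v)).trans_eq ?_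
      rw [Real.sqrt_mul (sq_nonneg _), Real.sqrt_sq (norm_nonneg _), mul_comm]
  rw [← ofReal_norm, ← ENNReal.ofReal_pow (norm_nonneg _)]
  exact ENNReal.ofReal_le_ofReal ((Real.le_sqrt (norm_nonneg _) (gradNormSq_nonneg f x)).1 h)

lemma enorm_timePartial_sq_le_ofReal_energyDensity (u : ℝ → Eucl n → F) (t : ℝ) (x : Eucl n) :
    ‖timePartial u t x‖ₑ ^ 2 ≤ ENNReal.ofReal (energyDensity u t x) := by
  rw [← ofReal_norm, ← ENNReal.ofReal_pow (norm_nonneg _)]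
  exact ENNReal.ofReal_le_ofReal (le_add_of_nonneg_left (gradNormSq_nonneg _ _))

end NormedSpace

variable [InnerProductSpace ℝ F] {u : ℝ → Eucl n → F} {t ρ : ℝ}

namespace IsClassicalWave

lemma lintegral_enorm_sub_sq_le (hu : IsClassicalWave u) (ht : 0 ≤ t) :
    ∫⁻ x, ‖u t x - u 0 x‖ₑ ^ 2 ≤ ENNReal.ofReal (t ^ 2) * energy u 0 := by
  have hderiv : Continuous fun p : Eucl n × ℝ => timePartial u p.2 p.1 :=
    (contDiff_timePartial (m := 1) hu.contDiff).continuous.comp continuous_swap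
  calc ∫⁻ x, ‖u t x - u 0 x‖ₑ ^ 2
      ≤ ∫⁻ x, ENNReal.ofReal t * ∫⁻ s in Icc 0 t, ‖timePartial u s x‖ₑ ^ 2 :=
        lintegral_mono fun x => (enorm_sub_sq_le_mul_lintegral_deriv_sq
          ((hu.contDiff.of_le one_le_two).comp (contDiff_prodMk_left x)) ht).trans_eq
            (by rw [sub_zero]; rfl)
    _ = ENNReal.ofReal t * ∫⁻ s in Icc 0 t, ∫⁻ x, ‖timePartial u s x‖ₑ ^ 2 := by
        rw [lintegral_const_mul' _ _ ENNReal.ofReal_ne_top,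
          lintegral_lintegral_swap (hderiv.enorm.measurable.pow_const 2).aemeasurable]
    _ ≤ ENNReal.ofReal t * ∫⁻ _ in Icc 0 t, energy u 0 := by
        gcongr _ * ?_
        exact setLIntegral_mono' measurableSet_Icc fun s hs =>
          (lintegral_mono (enorm_timePartial_sq_le_ofReal_energyDensity u s)).trans
            (hu.energy_le hs.1)
    _ = ENNReal.ofReal (t ^ 2) * energy u 0 := by
        rw [setLIntegral_const, Real.volume_Icc, sub_zero, ENNReal.ofReal_pow ht]
        ring

theorem exists_forall_setLIntegral_enorm_sub_sq_le (hu : IsClassicalWave u) (hρ : 0 < ρ) :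
    ∃ c : F, ∀ t ∈ Icc 0 ρ, ∫⁻ x in Metric.closedBall 0 (2 * ρ), ‖u t x - c‖ₑ ^ 2 ≤
      ENNReal.ofReal ((2 ^ n * 32 + 2) * ρ ^ 2) * energy u 0 := by
  have hdata : ContDiff ℝ 1 (u 0) := (contDiff_slice hu.contDiff 0).of_le one_le_two
  obtain ⟨c, hc⟩ := exists_setLIntegral_closedBall_enorm_sub_sq_le volume hdata
    (mul_pos two_pos hρ)
  rw [finrank_euclideanSpace_fin] at hc
  have hgrad : ∫⁻ x, ‖fderiv ℝ (u 0) x‖ₑ ^ 2 ≤ energy u 0 := lintegral_mono fun x =>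
    (enorm_fderiv_sq_le_ofReal_gradNormSq (u 0) x).trans
      (ENNReal.ofReal_le_ofReal (gradNormSq_le_energyDensity u _ _))
  refine ⟨c, fun t ht => ?_⟩
  have hmeas : Measurable fun x => 2 * ‖u t x - u 0 x‖ₑ ^ 2 :=
    (((hu.contDiff.continuous.uncurry_left t).sub hdata.continuous).enorm.measurable.pow_const
      2).const_mul 2
  calc ∫⁻ x in Metric.closedBall 0 (2 * ρ), ‖u t x - c‖ₑ ^ 2
      ≤ ∫⁻ x in Metric.closedBall 0 (2 * ρ), (2 * ‖u t x - u 0 x‖ₑ ^ 2 + 2 * ‖u 0 x - c‖ₑ ^ 2) :=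
        lintegral_mono fun x => by simpa using enorm_add_sq_le (u t x - u 0 x) (u 0 x - c)
    _ ≤ 2 * (∫⁻ x, ‖u t x - u 0 x‖ₑ ^ 2) +
          2 * ∫⁻ x in Metric.closedBall 0 (2 * ρ), ‖u 0 x - c‖ₑ ^ 2 := by
        rw [lintegral_add_left hmeas, lintegral_const_mul' _ _ (by simp),
          lintegral_const_mul' _ _ (by simp)]
        gcongr
        exact Measure.restrict_le_self
    _ ≤ 2 * (ENNReal.ofReal (ρ ^ 2) * energy u 0) +
          2 * (ENNReal.ofReal (2 ^ n * (2 * (2 * ρ)) ^ 2) * energy u 0) := by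
        gcongr
        · refine (hu.lintegral_enorm_sub_sq_le ht.1).trans ?_
          gcongr
          exacts [ht.1, ht.2]
        · exact hc.trans (by gcongr)
    _ = ENNReal.ofReal ((2 ^ n * 32 + 2) * ρ ^ 2) * energy u 0 := by
        rw [← mul_assoc, ← mul_assoc, ← add_mul, ← ENNReal.ofReal_ofNat 2,
          ← ENNReal.ofReal_mul zero_le_two, ← ENNReal.ofReal_mul zero_le_two,
          ← ENNReal.ofReal_add (by positivity) (by positivity)]
        ring_nf

end IsClassicalWave

end Mass

section ConstantsAndReflection

variable {n : ℕ} {F : Type*} [NormedAddCommGroup F] [NormedSpace ℝ F] {u : ℝ → Eucl n → F}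

lemma timePartial_sub_const (u : ℝ → Eucl n → F) (c : F) :
    timePartial (fun t x => u t x - c) = timePartial u := by
  ext t x
  exact deriv_sub_const c

lemma partialDeriv_sub_const (i : Fin n) (f : Eucl n → F) (c : F) :
    partialDeriv i (fun x => f x - c) = partialDeriv i f := by
  ext x
  rw [partialDeriv, fderiv_sub_const, partialDeriv]

lemma energyDensity_sub_const (u : ℝ → Eucl n → F) (c : F) :
    energyDensity (fun t x => u t x - c) = energyDensity u := by
  ext t x
  simp only [energyDensity, gradNormSq, partialDeriv_sub_const, timePartial_sub_const]

lemma timePartial_comp_neg (u : ℝ → Eucl n → F) :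
    timePartial (fun t => u (-t)) = fun t x => -timePartial u (-t) x := by
  ext t x
  exact deriv_comp_neg (fun s => u s x) t

lemma energyDensity_comp_neg (u : ℝ → Eucl n → F) (t : ℝ) (x : Eucl n) :
    energyDensity (fun t => u (-t)) t x = energyDensity u (-t) x := by
  rw [energyDensity, timePartial_comp_neg, norm_neg, energyDensity]

lemma energy_comp_neg (u : ℝ → Eucl n → F) (t : ℝ) :
    energy (fun t => u (-t)) t = energy u (-t) := by
  simp only [energy, energyDensity_comp_neg]

namespace IsClassicalWave

lemma sub_const (hu : IsClassicalWave u) (c : F) : IsClassicalWave fun t x => u t x - c where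
  contDiff := hu.contDiff.sub contDiff_const
  wave_eq t x := by
    simpa only [timePartial_sub_const, coordLaplacian, partialDeriv_sub_const] using hu.wave_eq t x

lemma comp_neg (hu : IsClassicalWave u) : IsClassicalWave fun t => u (-t) where
  contDiff := hu.contDiff.comp (contDiff_fst.neg.prodMk contDiff_snd)
  wave_eq t x := by
    rw [timePartial_comp_neg, ← hu.wave_eq (-t) x]
    calc timePartial (fun t x => -timePartial u (-t) x) t x
        = -timePartial (fun t => timePartial u (-t)) t x := deriv.fun_neg
      _ = timePartial (timePartial u) (-t) x := by rw [timePartial_comp_neg, neg_neg]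

end IsClassicalWave

end ConstantsAndReflection

section LocalEnergyDecay

variable {n : ℕ} {F : Type*} [NormedAddCommGroup F] [InnerProductSpace ℝ F]
  {K R ρ : ℝ} {χ : Eucl n → ℝ} {u : ℝ → Eucl n → F}

lemma one_le_three_mul_morawetzWeight_pow (hR : 0 < R) {x : Eucl n} (hx : ‖x‖ ≤ R) :
    1 ≤ 3 * R * (R ^ 2 * morawetzWeight R x ^ 3) := by
  set q := R * morawetzWeight R x
  have hq0 : 0 < q := mul_pos hR (morawetzWeight_pos hR x)
  have hsq : 1 ≤ 2 * q ^ 2 :=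
    calc 1 = morawetzWeight R x ^ 2 * (R ^ 2 + ‖x‖ ^ 2) := (morawetzWeight_sq_mul hR x).symm
      _ ≤ morawetzWeight R x ^ 2 * (R ^ 2 + R ^ 2) := by gcongr
      _ = 2 * q ^ 2 := by ring
  have hlower : 2 / 3 ≤ q := by nlinarith
  calc 1 ≤ 3 * q ^ 3 := by nlinarith
    _ = 3 * R * (R ^ 2 * morawetzWeight R x ^ 3) := by ring

namespace IsSpatialCutoff

lemma setLIntegral_energyDensity_le (hχ : IsSpatialCutoff K ρ χ) (hR : 0 < R) (hRρ : R ≤ ρ)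
    (hu : ContDiff ℝ 2 (uncurry u)) (t : ℝ) :
    ∫⁻ x in Metric.closedBall 0 R, ENNReal.ofReal (energyDensity u t x) ≤
      ENNReal.ofReal (3 * R * ∫ x in Metric.closedBall 0 (2 * ρ),
        χ x * (R ^ 2 * morawetzWeight R x ^ 3) * energyDensity u t x) := by
  have hnonneg (x : Eucl n) : 0 ≤ χ x * (R ^ 2 * morawetzWeight R x ^ 3) * energyDensity u t x :=
    mul_nonneg (mul_nonneg (hχ.nonneg x)
      (mul_nonneg (sq_nonneg R) (pow_nonneg (morawetzWeight_pos hR x).le 3)))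
      (energyDensity_nonneg u t x)
  rw [ENNReal.ofReal_mul (by positivity), ofReal_integral_eq_lintegral_ofReal
      (integrableOn_slice (hχ.continuous_uncurry_mul_energyDensity hR hu)
        (isCompact_closedBall 0 (2 * ρ)) t) (.of_forall hnonneg),
    ← lintegral_const_mul' _ _ ENNReal.ofReal_ne_top]
  refine (setLIntegral_mono' measurableSet_closedBall fun x hx => ?_).trans
    (lintegral_mono_set (Metric.closedBall_subset_closedBall (by linarith)))
  have hxR : ‖x‖ ≤ R := mem_closedBall_zero_iff.1 hx
  rw [← ENNReal.ofReal_mul (by positivity), hχ.eq_one x (hxR.trans hRρ), one_mul, ← mul_assoc]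
  exact ENNReal.ofReal_le_ofReal (le_mul_of_one_le_left (energyDensity_nonneg u t x)
    (one_le_three_mul_morawetzWeight_pow hR hxR))

lemma setLIntegral_setLIntegral_energyDensity_le (hχ : IsSpatialCutoff K ρ χ) (hR : 0 < R)
    (hRρ : R ≤ ρ) (hu : ContDiff ℝ 2 (uncurry u)) :
    ∫⁻ t in Ioc 0 ρ, ∫⁻ x in Metric.closedBall 0 R, ENNReal.ofReal (energyDensity u t x) ≤
      ENNReal.ofReal (3 * R * ∫ t in 0..ρ, ∫ x in Metric.closedBall 0 (2 * ρ),
        χ x * (R ^ 2 * morawetzWeight R x ^ 3) * energyDensity u t x) := by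
  have hcont : Continuous fun t => ∫ x in Metric.closedBall 0 (2 * ρ),
      χ x * (R ^ 2 * morawetzWeight R x ^ 3) * energyDensity u t x :=
    continuous_setIntegral_slice (hχ.continuous_uncurry_mul_energyDensity hR hu)
      (isCompact_closedBall 0 (2 * ρ))
  have hnonneg (t : ℝ) : 0 ≤ ∫ x in Metric.closedBall 0 (2 * ρ),
      χ x * (R ^ 2 * morawetzWeight R x ^ 3) * energyDensity u t x :=
    integral_nonneg fun x => mul_nonneg (mul_nonneg (hχ.nonneg x)
      (mul_nonneg (sq_nonneg R) (pow_nonneg (morawetzWeight_pos hR x).le 3)))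
      (energyDensity_nonneg u t x)
  rw [intervalIntegral.integral_of_le (hR.le.trans hRρ), ← integral_const_mul,
    ofReal_integral_eq_lintegral_ofReal
      ((hcont.const_mul _).integrableOn_Icc.mono_set Ioc_subset_Icc_self)
      (.of_forall fun t => mul_nonneg (by positivity) (hnonneg t))]
  exact lintegral_mono (hχ.setLIntegral_energyDensity_le hR hRρ hu)

end IsSpatialCutoff

namespace IsClassicalWave

lemma setIntegral_energyDensity_le (hu : IsClassicalWave u) (hfin : energy u 0 ≠ ⊤) {t : ℝ}
    (ht : 0 ≤ t) (s : Set (Eucl n)) :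
    ∫ x in s, energyDensity u t x ≤ (energy u 0).toReal := by
  rw [integral_eq_lintegral_of_nonneg_ae (.of_forall (energyDensity_nonneg u t))
    ((contDiff_uncurry_energyDensity hu.contDiff).continuous.uncurry_left t).aestronglyMeasurable]
  exact ENNReal.toReal_mono hfin ((setLIntegral_le_lintegral _ _).trans (hu.energy_le ht))

lemma exists_forall_setIntegral_norm_sub_sq_le (hu : IsClassicalWave u) (hfin : energy u 0 ≠ ⊤)
    (hρ : 0 < ρ) : ∃ c : F, ∀ t ∈ Icc 0 ρ, ∫ x in Metric.closedBall 0 (2 * ρ), ‖u t x - c‖ ^ 2 ≤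
      (2 ^ n * 32 + 2) * (energy u 0).toReal * ρ ^ 2 := by
  obtain ⟨c, hc⟩ := hu.exists_forall_setLIntegral_enorm_sub_sq_le hρ
  refine ⟨c, fun t ht => ?_⟩
  have hcont : Continuous fun x => ‖u t x - c‖ ^ 2 :=
    ((hu.contDiff.continuous.uncurry_left t).sub continuous_const).norm.pow 2
  rw [integral_eq_lintegral_of_nonneg_ae (.of_forall fun x => sq_nonneg _)
    hcont.aestronglyMeasurable]
  simp only [ENNReal.ofReal_pow (norm_nonneg _), ofReal_norm]
  refine (ENNReal.toReal_mono (ENNReal.mul_ne_top ENNReal.ofReal_ne_top hfin)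
    (hc t ht)).trans_eq ?_
  rw [ENNReal.toReal_mul, ENNReal.toReal_ofReal (by positivity)]
  ring

end IsClassicalWave

lemma exists_setLIntegral_Ioc_energyDensity_le (F : Type*) [NormedAddCommGroup F]
    [InnerProductSpace ℝ F] (hn : 3 ≤ n) :
    ∃ C : ℝ, 0 < C ∧ ∀ u : ℝ → Eucl n → F, IsClassicalWave u → ∀ R ρ : ℝ, 0 < R → R ≤ ρ →
      ∫⁻ t in Ioc 0 ρ, ∫⁻ x in Metric.closedBall 0 R, ENNReal.ofReal (energyDensity u t x) ≤
        ENNReal.ofReal (C * R) * energy u 0 := by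
  obtain ⟨K, hK, hcutoff⟩ := exists_isSpatialCutoff n
  set M : ℝ := 2 ^ n * 32 + 2
  have : 0 < M := by positivity
  refine ⟨3 * (4 * (1 + 2 * (n ^ 2 + 1) * (1 + K ^ 2 * M)) + 2 * (2 * K + n * K * M)),
    by positivity, fun u hu R ρ hR hRρ => ?_⟩
  by_cases hfin : energy u 0 = ⊤
  · rw [hfin, ENNReal.mul_top (ENNReal.ofReal_pos.2 (by positivity)).ne']
    exact le_top
  have hρ : 0 < ρ := hR.trans_le hRρ
  set E := (energy u 0).toReal with hE
  obtain ⟨χ, hχ⟩ := hcutoff ρ hρ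
  obtain ⟨c, hmass⟩ := hu.exists_forall_setIntegral_norm_sub_sq_le hfin hρ
  have hmorawetz := hχ.intervalIntegral_setIntegral_mul_energyDensity_le hn hK.le hρ hR
    (hu.sub_const c)
    (fun t ht => by
      rw [energyDensity_sub_const]
      exact hu.setIntegral_energyDensity_le hfin ht.1 _) hmass
  rw [energyDensity_sub_const] at hmorawetz
  refine (hχ.setLIntegral_setLIntegral_energyDensity_le hR hRρ hu.contDiff).trans ?_
  rw [← ENNReal.ofReal_toReal hfin, ← hE, ← ENNReal.ofReal_mul (by positivity)]
  refine ENNReal.ofReal_le_ofReal ((mul_le_mul_of_nonneg_left hmorawetz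
    (by positivity)).trans_eq ?_)
  ring

lemma lintegral_eq_setLIntegral_Ioi_add_comp_neg (f : ℝ → ℝ≥0∞) :
    ∫⁻ t, f t = (∫⁻ t in Ioi 0, f t) + ∫⁻ t in Ioi 0, f (-t) := by
  have hneg := (Measure.measurePreserving_neg (volume : Measure ℝ)).setLIntegral_comp_preimage_emb
    (MeasurableEquiv.neg ℝ).measurableEmbedding f (Iio 0)
  have hpreimage : (Neg.neg : ℝ → ℝ) ⁻¹' Iio 0 = Ioi 0 := by
    ext
    simp
  rw [← lintegral_add_compl f measurableSet_Ioi, compl_Ioi, ← hpreimage, hneg,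
    setLIntegral_congr Iio_ae_eq_Iic]

theorem exists_lintegral_setLIntegral_closedBall_energyDensity_le (F : Type*)
    [NormedAddCommGroup F] [InnerProductSpace ℝ F] (hn : 3 ≤ n) :
    ∃ C : ℝ, 0 < C ∧ ∀ u : ℝ → Eucl n → F, IsClassicalWave u → ∀ R : ℝ, 0 < R →
      ∫⁻ t, ∫⁻ x in Metric.closedBall 0 R, ENNReal.ofReal (energyDensity u t x) ≤
        ENNReal.ofReal (C * R) * energy u 0 := by
  obtain ⟨C, hC, hlocal⟩ := exists_setLIntegral_Ioc_energyDensity_le F hn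
  have hforward (u : ℝ → Eucl n → F) (hu : IsClassicalWave u) (R : ℝ) (hR : 0 < R) :
      ∫⁻ t in Ioi 0, ∫⁻ x in Metric.closedBall 0 R, ENNReal.ofReal (energyDensity u t x) ≤
        ENNReal.ofReal (C * R) * energy u 0 := by
    have hmeas : Measurable fun t =>
        ∫⁻ x in Metric.closedBall 0 R, ENNReal.ofReal (energyDensity u t x) :=
      Measurable.lintegral_prod_right'
        (contDiff_uncurry_energyDensity hu.contDiff).continuous.measurable.ennreal_ofReal
    refine le_of_tendsto ((aecover_Iic Filter.tendsto_id).lintegral_tendsto_of_countably_generated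
      hmeas.aemeasurable) ?_
    filter_upwards [Filter.eventually_ge_atTop R] with ρ hρ
    rw [Measure.restrict_restrict measurableSet_Iic, inter_comm, Ioi_inter_Iic]
    exact hlocal u hu R ρ hR hρ
  refine ⟨2 * C, by positivity, fun u hu R hR => ?_⟩
  have hbackward := hforward _ hu.comp_neg R hR
  simp only [energyDensity_comp_neg, energy_comp_neg, neg_zero] at hbackward
  rw [lintegral_eq_setLIntegral_Ioi_add_comp_neg]
  refine (add_le_add (hforward u hu R hR) hbackward).trans_eq ?_
  rw [← two_mul, ← mul_assoc, mul_assoc 2 C R, ENNReal.ofReal_mul zero_le_two,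
    ENNReal.ofReal_ofNat]

end LocalEnergyDecay

section DyadicSummation

variable {E : Type*} [NormedAddCommGroup E] [MeasurableSpace E] [OpensMeasurableSpace E]
  {μ : Measure E} {g : E → ℝ≥0∞}

lemma lintegral_rpow_neg_mul_le_tsum (hg : Measurable g) {s : ℝ} (hs : 0 ≤ s) :
    ∫⁻ x, ENNReal.ofReal ((1 + ‖x‖) ^ (-s)) * g x ∂μ ≤
      ∑' k : ℕ, ENNReal.ofReal (((2 : ℝ) ^ k) ^ (-s)) *
        ∫⁻ x in Metric.closedBall 0 (2 ^ (k + 1)), g x ∂μ := by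
  have hpointwise (x : E) : ENNReal.ofReal ((1 + ‖x‖) ^ (-s)) * g x ≤
      ∑' k : ℕ, ENNReal.ofReal (((2 : ℝ) ^ k) ^ (-s)) *
        (Metric.closedBall 0 (2 ^ (k + 1))).indicator g x := by
    obtain ⟨k, hle, hlt⟩ :=
      exists_nat_pow_near (le_add_of_nonneg_right (norm_nonneg x)) (one_lt_two (α := ℝ))
    have hx : x ∈ Metric.closedBall 0 (2 ^ (k + 1)) :=
      mem_closedBall_zero_iff.2 (by linarith)
    refine le_trans ?_ (ENNReal.le_tsum k)
    rw [indicator_of_mem hx]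
    gcongr ENNReal.ofReal ?_ * _
    exact Real.rpow_le_rpow_of_nonpos (by positivity) hle (neg_nonpos.2 hs)
  refine (lintegral_mono hpointwise).trans_eq ?_
  rw [lintegral_tsum fun k =>
    ((hg.indicator measurableSet_closedBall).const_mul _).aemeasurable]
  refine tsum_congr fun k => ?_
  rw [lintegral_const_mul' _ _ ENNReal.ofReal_ne_top, lintegral_indicator measurableSet_closedBall]

theorem lintegral_rpow_neg_mul_le_of_forall_closedBall (hg : Measurable g) {η : ℝ} (hη : 0 < η)
    {A : ℝ≥0∞} (hball : ∀ R : ℝ, 0 < R →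
      ∫⁻ x in Metric.closedBall 0 R, g x ∂μ ≤ ENNReal.ofReal R * A) :
    ∫⁻ x, ENNReal.ofReal ((1 + ‖x‖) ^ (-(1 + η))) * g x ∂μ ≤
      2 * (1 - ENNReal.ofReal (2 ^ (-η)))⁻¹ * A := by
  have hterm (k : ℕ) : ((2 : ℝ) ^ k) ^ (-(1 + η)) * 2 ^ (k + 1) = 2 * (2 ^ (-η)) ^ k := by
    have hk : (0 : ℝ) < 2 ^ k := by positivity
    rw [neg_add, Real.rpow_add hk, Real.rpow_neg_one, Real.rpow_pow_comm zero_le_two, pow_succ]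
    field_simp
  calc ∫⁻ x, ENNReal.ofReal ((1 + ‖x‖) ^ (-(1 + η))) * g x ∂μ
      ≤ ∑' k : ℕ, ENNReal.ofReal (((2 : ℝ) ^ k) ^ (-(1 + η))) *
          ∫⁻ x in Metric.closedBall 0 (2 ^ (k + 1)), g x ∂μ :=
        lintegral_rpow_neg_mul_le_tsum hg (by positivity)
    _ ≤ ∑' k : ℕ, ENNReal.ofReal (((2 : ℝ) ^ k) ^ (-(1 + η))) *
          (ENNReal.ofReal (2 ^ (k + 1)) * A) := by
        gcongr with k
        exact hball _ (by positivity)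
    _ = ∑' k : ℕ, 2 * ENNReal.ofReal (2 ^ (-η)) ^ k * A := by
        refine tsum_congr fun k => ?_
        rw [← mul_assoc, ← ENNReal.ofReal_mul (by positivity), hterm,
          ENNReal.ofReal_mul zero_le_two, ENNReal.ofReal_ofNat, ENNReal.ofReal_pow (by positivity)]
    _ = 2 * (1 - ENNReal.ofReal (2 ^ (-η)))⁻¹ * A := by
        rw [ENNReal.tsum_mul_right, ENNReal.tsum_mul_left, ENNReal.tsum_geometric]

end DyadicSummation

lemma energy_eq_add {n : ℕ} {F : Type*} [NormedAddCommGroup F] [InnerProductSpace ℝ F]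
    {u : ℝ → Eucl n → F} (hu : ContDiff ℝ 1 (u 0)) :
    energy u 0 = (∫⁻ x, ENNReal.ofReal (gradNormSq (u 0) x)) + ∫⁻ x, ‖timePartial u 0 x‖ₑ ^ 2 := by
  rw [← lintegral_add_left
    (contDiff_gradNormSq (m := 0) hu).continuous.measurable.ennreal_ofReal]
  refine lintegral_congr fun x => ?_
  rw [energyDensity, ENNReal.ofReal_add (gradNormSq_nonneg _ _) (sq_nonneg _),
    ENNReal.ofReal_pow (norm_nonneg _), ofReal_norm]

end

end WaveEquation

open WaveEquation

theorem gradient_weighted_estimate_general (F : Type*) [NormedAddCommGroup F]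
    [InnerProductSpace ℝ F] (n : ℕ) (hn : 3 ≤ n) (η : ℝ) (hη : 0 < η) :
    ∃ C : ℝ≥0∞, C ≠ ∞ ∧ ∀ u : ℝ → Eucl n → F, IsClassicalWave u →
      ∫⁻ t, ∫⁻ x, ENNReal.ofReal ((1 + ‖x‖) ^ (-(1 + η))) * ENNReal.ofReal (energyDensity u t x) ≤
        C * ((∫⁻ x, ENNReal.ofReal (gradNormSq (u 0) x)) + ∫⁻ x, ‖timePartial u 0 x‖ₑ ^ 2) := by
  obtain ⟨K, -, hball⟩ := exists_lintegral_setLIntegral_closedBall_energyDensity_le F hn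
  refine ⟨2 * (1 - ENNReal.ofReal (2 ^ (-η)))⁻¹ * ENNReal.ofReal K, ?_, fun u hu => ?_⟩
  · have hratio : ENNReal.ofReal (2 ^ (-η)) < 1 := ENNReal.ofReal_lt_one.2
      (Real.rpow_lt_one_of_one_lt_of_neg one_lt_two (neg_neg_of_pos hη))
    exact ENNReal.mul_ne_top (ENNReal.mul_ne_top ENNReal.ofNat_ne_top
      (ENNReal.inv_ne_top.2 (tsub_pos_of_lt hratio).ne')) ENNReal.ofReal_ne_top
  have hmeas : Measurable (Function.uncurry fun t x => ENNReal.ofReal (energyDensity u t x)) :=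
    (contDiff_uncurry_energyDensity hu.contDiff).continuous.measurable.ennreal_ofReal
  have hweight : Measurable fun p : ℝ × Eucl n => ENNReal.ofReal ((1 + ‖p.2‖) ^ (-(1 + η))) := by
    fun_prop
  rw [← energy_eq_add ((contDiff_slice hu.contDiff 0).of_le one_le_two),
    lintegral_lintegral_swap (hweight.mul hmeas).aemeasurable, mul_assoc _ _ (energy u 0)]
  simp only [lintegral_const_mul' _ _ ENNReal.ofReal_ne_top]
  refine lintegral_rpow_neg_mul_le_of_forall_closedBall hmeas.lintegral_prod_left' hη fun R hR => ?_
  refine ((lintegral_lintegral_swap hmeas.aemeasurable).symm.trans_le (hball u hu R hR)).trans_eq ?_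
  rw [mul_comm K, ENNReal.ofReal_mul hR.le, mul_assoc]

/-- gradient weighted space-time estimate. -/
theorem gradient_weighted_estimate (n : ℕ) (hn : 3 ≤ n) (η : ℝ) (hη : 0 < η) :
    ∃ C : ℝ≥0∞, C ≠ ∞ ∧ ∀ u : ℝ → Eucl n → ℂ, IsWaveSolution u →
      (∫⁻ x : Eucl n, ENNReal.ofReal (gradSq (u 0) x)) +
          (∫⁻ x : Eucl n, (‖timeDeriv u 0 x‖₊ : ℝ≥0∞) ^ 2) ≠ ∞ →
      (∫⁻ t : ℝ, ∫⁻ x : Eucl n,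
          ENNReal.ofReal ((1 + ‖x‖) ^ (-(1 + η))) * ENNReal.ofReal (gradSq (u t) x)) ≤
        C * ((∫⁻ x : Eucl n, ENNReal.ofReal (gradSq (u 0) x)) +
          ∫⁻ x : Eucl n, (‖timeDeriv u 0 x‖₊ : ℝ≥0∞) ^ 2) := by
  obtain ⟨C, hC, hestimate⟩ := gradient_weighted_estimate_general ℂ n hn η hη
  refine ⟨C, hC, fun u hu _ => le_trans ?_ (hestimate u ⟨contDiff_infty.1 hu.1 2, hu.2⟩)⟩
  gcongr with t x
  exact gradNormSq_le_energyDensity u t x
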